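/- Let q = p^f be a power of a prime p, let n ≥ 2 and suppose GL_n(q) is not solvable. Let π be a set of primes with 2 ∈ π, 3 ∉ π and p ∉ π, and let H be a solvable Hall π-subgroup of GL_n(q). Set G = H·SL_n(q). Then there exist x, y, z ∈ G such that H ∩ H^x ∩ H^y ∩ H^z is contained in the center Z(GL_n(q)), i.e. consists of scalar matrices. -/

import Mathlib

open Matrix Pointwise

/-- `H^x = x⁻¹ H x`. -/
def conjBy {G : Type*} [Group G] (H : Subgroup G) (x : G) : Subgroup G :=
  Subgroup.map ((MulAut.conj x⁻¹).toMonoidHom) H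

/-- Hall π-subgroup of the whole group. -/
def IsHallSubgroup {G : Type*} [Group G] (π : Set ℕ) (H : Subgroup G) : Prop :=
  (∀ r : ℕ, r.Prime → r ∣ Nat.card H → r ∈ π) ∧ ∀ r ∈ π, ¬ r ∣ H.index

/-- Hall π-subgroup of the subgroup `K`. -/
def IsHallSubgroupIn {G : Type*} [Group G] (π : Set ℕ) (K H : Subgroup G) : Prop :=
  H ≤ K ∧ (∀ r : ℕ, r.Prime → r ∣ Nat.card H → r ∈ π) ∧ ∀ r ∈ π, ¬ r ∣ H.relIndex K

/-- The subgroup `SL_n` of `GL_n`. -/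
def SLsub (n : ℕ) (F : Type*) [Field F] : Subgroup (GL (Fin n) F) where
  carrier := {g | Matrix.det (g : Matrix (Fin n) (Fin n) F) = 1}
  one_mem' := by simp
  mul_mem' := by
    intro a b ha hb
    simp only [Set.mem_setOf_eq, Units.val_mul, Matrix.det_mul] at *
    rw [ha, hb, one_mul]
  inv_mem' := by
    intro g hg
    simp only [Set.mem_setOf_eq] at *
    have h1 : ((g⁻¹ : GL (Fin n) F) : Matrix (Fin n) (Fin n) F) *
        (g : Matrix (Fin n) (Fin n) F) = 1 := g.inv_mul
    have := congrArg Matrix.det h1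
    rw [Matrix.det_mul, Matrix.det_one, hg, mul_one] at this
    exact this

/-- The group of similitudes of the bilinear form `B` (acting on row vectors). -/
def similitudeGroup {n : ℕ} {F : Type*} [Field F]
    (B : (Fin n → F) → (Fin n → F) → F) : Subgroup (GL (Fin n) F) where
  carrier := {g | ∃ c : Fˣ, ∀ u v : Fin n → F,
    B (Matrix.vecMul u (g : Matrix (Fin n) (Fin n) F))
      (Matrix.vecMul v (g : Matrix (Fin n) (Fin n) F)) = (c : F) * B u v}
  one_mem' := ⟨1, by simp⟩
  mul_mem' := by
    rintro a b ⟨c, hc⟩ ⟨d, hd⟩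
    refine ⟨c * d, fun u v => ?_⟩
    simp only [Units.val_mul, ← Matrix.vecMul_vecMul, hd, hc]
    ring
  inv_mem' := by
    rintro g ⟨c, hc⟩
    refine ⟨c⁻¹, fun u v => ?_⟩
    have h1 : ∀ w : Fin n → F, Matrix.vecMul
        (Matrix.vecMul w ((g⁻¹ : GL (Fin n) F) : Matrix (Fin n) (Fin n) F))
        (g : Matrix (Fin n) (Fin n) F) = w := by
      intro w
      rw [Matrix.vecMul_vecMul, g.inv_mul, Matrix.vecMul_one]
    have h2 := hc (Matrix.vecMul u ((g⁻¹ : GL (Fin n) F) : Matrix (Fin n) (Fin n) F))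
      (Matrix.vecMul v ((g⁻¹ : GL (Fin n) F) : Matrix (Fin n) (Fin n) F))
    rw [h1, h1] at h2
    rw [h2, Units.val_inv_eq_inv_val, inv_mul_cancel_left₀ (by exact_mod_cast c.ne_zero)]

/-- The isometry group of the bilinear form `B` (acting on row vectors). -/
def isometryGroup {n : ℕ} {F : Type*} [Field F]
    (B : (Fin n → F) → (Fin n → F) → F) : Subgroup (GL (Fin n) F) where
  carrier := {g | ∀ u v : Fin n → F,
    B (Matrix.vecMul u (g : Matrix (Fin n) (Fin n) F))
      (Matrix.vecMul v (g : Matrix (Fin n) (Fin n) F)) = B u v}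
  one_mem' := by simp
  mul_mem' := by
    intro a b ha hb u v
    simp only [Set.mem_setOf_eq] at ha hb
    simp only [Units.val_mul, ← Matrix.vecMul_vecMul]
    rw [hb, ha]
  inv_mem' := by
    intro g hg u v
    have h1 : ∀ w : Fin n → F, Matrix.vecMul
        (Matrix.vecMul w ((g⁻¹ : GL (Fin n) F) : Matrix (Fin n) (Fin n) F))
        (g : Matrix (Fin n) (Fin n) F) = w := by
      intro w
      rw [Matrix.vecMul_vecMul, g.inv_mul, Matrix.vecMul_one]
    have h2 := hg (Matrix.vecMul u ((g⁻¹ : GL (Fin n) F) : Matrix (Fin n) (Fin n) F))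
      (Matrix.vecMul v ((g⁻¹ : GL (Fin n) F) : Matrix (Fin n) (Fin n) F))
    rw [h1, h1] at h2
    exact h2.symm

/-- The group of similitudes of the quadratic form `Q` (acting on row vectors). -/
def qSimilitudeGroup {n : ℕ} {F : Type*} [Field F]
    (Q : (Fin n → F) → F) : Subgroup (GL (Fin n) F) where
  carrier := {g | ∃ c : Fˣ, ∀ v : Fin n → F,
    Q (Matrix.vecMul v (g : Matrix (Fin n) (Fin n) F)) = (c : F) * Q v}
  one_mem' := ⟨1, by simp⟩
  mul_mem' := by
    rintro a b ⟨c, hc⟩ ⟨d, hd⟩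
    refine ⟨c * d, fun v => ?_⟩
    simp only [Units.val_mul, ← Matrix.vecMul_vecMul, hd, hc]
    ring
  inv_mem' := by
    rintro g ⟨c, hc⟩
    refine ⟨c⁻¹, fun v => ?_⟩
    have h1 : ∀ w : Fin n → F, Matrix.vecMul
        (Matrix.vecMul w ((g⁻¹ : GL (Fin n) F) : Matrix (Fin n) (Fin n) F))
        (g : Matrix (Fin n) (Fin n) F) = w := by
      intro w
      rw [Matrix.vecMul_vecMul, g.inv_mul, Matrix.vecMul_one]
    have h2 := hc (Matrix.vecMul v ((g⁻¹ : GL (Fin n) F) : Matrix (Fin n) (Fin n) F))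
    rw [h1] at h2
    rw [h2, Units.val_inv_eq_inv_val, inv_mul_cancel_left₀ (by exact_mod_cast c.ne_zero)]

/-- The unitary group `GU_n` with respect to the field automorphism `φ`. -/
def GUgrp (n : ℕ) {K : Type*} [Field K] (φ : K →+* K) : Subgroup (GL (Fin n) K) where
  carrier := {g | ((g : Matrix (Fin n) (Fin n) K).map φ)ᵀ * (g : Matrix (Fin n) (Fin n) K) = 1}
  one_mem' := by
    simp [Matrix.map_one φ φ.map_zero φ.map_one]
  mul_mem' := by
    intro a b ha hb
    simp only [Set.mem_setOf_eq, Units.val_mul, Matrix.map_mul, Matrix.transpose_mul] at *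
    calc ((b : Matrix (Fin n) (Fin n) K).map φ)ᵀ * ((a : Matrix (Fin n) (Fin n) K).map φ)ᵀ *
          ((a : Matrix (Fin n) (Fin n) K) * (b : Matrix (Fin n) (Fin n) K))
        = ((b : Matrix (Fin n) (Fin n) K).map φ)ᵀ *
          (((a : Matrix (Fin n) (Fin n) K).map φ)ᵀ * (a : Matrix (Fin n) (Fin n) K)) *
          (b : Matrix (Fin n) (Fin n) K) := by noncomm_ring
      _ = 1 := by rw [ha, mul_one, hb]
  inv_mem' := by
    intro g hg
    simp only [Set.mem_setOf_eq] at *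
    have hcomm : (g : Matrix (Fin n) (Fin n) K) * ((g : Matrix (Fin n) (Fin n) K).map φ)ᵀ = 1 :=
      mul_eq_one_comm.mp hg
    have h1 : ((g : Matrix (Fin n) (Fin n) K) * ((g⁻¹ : GL (Fin n) K) : Matrix (Fin n) (Fin n) K)).map φ = 1 := by
      rw [g.mul_inv]
      exact Matrix.map_one φ φ.map_zero φ.map_one
    rw [Matrix.map_mul] at h1
    have h2 := congrArg Matrix.transpose h1
    rw [Matrix.transpose_mul, Matrix.transpose_one] at h2
    calc (((g⁻¹ : GL (Fin n) K) : Matrix (Fin n) (Fin n) K).map φ)ᵀ *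
          ((g⁻¹ : GL (Fin n) K) : Matrix (Fin n) (Fin n) K)
        = (((g⁻¹ : GL (Fin n) K) : Matrix (Fin n) (Fin n) K).map φ)ᵀ *
          (((g : Matrix (Fin n) (Fin n) K).map φ)ᵀ * (g : Matrix (Fin n) (Fin n) K)) *
          ((g⁻¹ : GL (Fin n) K) : Matrix (Fin n) (Fin n) K) := by rw [hg, mul_one]
      _ = ((((g⁻¹ : GL (Fin n) K) : Matrix (Fin n) (Fin n) K).map φ)ᵀ *
          ((g : Matrix (Fin n) (Fin n) K).map φ)ᵀ) *
          ((g : Matrix (Fin n) (Fin n) K) * ((g⁻¹ : GL (Fin n) K) : Matrix (Fin n) (Fin n) K)) := by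
            noncomm_ring
      _ = 1 := by rw [h2, g.mul_inv, mul_one]



/-- Last non-scalar term of the derived series. -/
lemma exists_last_nonscalar {T : Type*} [Group T] [Group.IsSolvable T] (S : T → Prop)
    (h1 : S 1) (r : T) (hr : ¬ S r) :
    ∃ N : Subgroup T, N.Normal ∧ (∃ x ∈ N, ¬ S x) ∧ ∀ x ∈ N, ∀ y ∈ N, S (x * y * x⁻¹ * y⁻¹) := by
  classical
  obtain ⟨m, hm⟩ := (‹Group.IsSolvable T›).solvable
  have hex : ∃ k, ∀ x ∈ derivedSeries T k, S x := ⟨m, by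
    intro x hx
    rw [hm, Subgroup.mem_bot] at hx
    rw [hx]; exact h1⟩
  have hspec := Nat.find_spec hex
  have hmin := fun k => Nat.find_min hex (m := k)
  set k := Nat.find hex
  rcases Nat.eq_zero_or_pos k with h0 | hpos
  · exact absurd (hspec r (by rw [h0]; simp)) hr
  · obtain ⟨l, hl⟩ : ∃ l, k = l + 1 := ⟨k - 1, by omega⟩
    refine ⟨derivedSeries T l, inferInstance, ?_, ?_⟩
    · have := hmin l (by omega)
      push Not at this
      exact this
    · intro x hx y hy
      apply hspec
      rw [hl, derivedSeries_succ]
      exact Subgroup.commutator_mem_commutator hx hy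

lemma orbit_card_dvd {T X : Type*} [Group T] [Finite T] [MulAction T X] (b : X) :
    Nat.card (MulAction.orbit T b) ∣ Nat.card T := by
  rw [Nat.card_congr (MulAction.orbitEquivQuotientStabilizer T b)]
  exact Subgroup.card_quotient_dvd_card _

/-- The action of a represented group on submodules. -/
@[reducible] def subAct {F W T : Type*} [Field F] [AddCommGroup W] [Module F W] [Group T]
    (ρ : T →* Module.End F W) : MulAction T (Submodule F W) where
  smul t U := U.map (ρ t)
  one_smul U := by
    change U.map (ρ 1) = U
    rw [map_one]; exact Submodule.map_id U
  mul_smul s t U := by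
    change U.map (ρ (s * t)) = (U.map (ρ t)).map (ρ s)
    rw [map_mul, ← Submodule.map_comp]; rfl

lemma finrank_sum_of_indep {F W ι : Type*} [Field F] [AddCommGroup W] [Module F W]
    [FiniteDimensional F W] [Fintype ι] (A : ι → Submodule F W) (hA : iSupIndep A)
    (htop : iSup A = ⊤) (d : ℕ) (hd : ∀ i, Module.finrank F (A i) = d) :
    Module.finrank F W = Fintype.card ι * d := by
  classical
  have hint := DirectSum.isInternal_submodule_of_iSupIndep_of_iSup_eq_top hA htop
  have e := LinearEquiv.ofBijective (DirectSum.coeLinearMap A) hint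
  rw [← e.finrank_eq, Module.finrank_directSum]
  simp [hd]

section
variable {F W T : Type*} [Field F] [AddCommGroup W] [Module F W] [Group T]

/-- Clifford step in dimension three: an abelian normal subgroup with an invariant line. -/
lemma clifford3 [FiniteDimensional F W] [Finite T] (hdim : Module.finrank F W = 3)
    (h3 : ¬ 3 ∣ Nat.card T) (ρ : T →* Module.End F W)
    (hirr : ∀ U : Submodule F W, U ≠ ⊥ → (∀ t, U.map (ρ t) ≤ U) → U = ⊤)
    (N : Subgroup T) (hN : N.Normal)
    (hcomm : ∀ x ∈ N, ∀ y ∈ N, ρ x * ρ y = ρ y * ρ x)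
    (w : W) (hw : w ≠ 0) (hwN : ∀ x ∈ N, ∃ c : F, ρ x w = c • w) :
    ∀ x ∈ N, ∃ c : F, ρ x = c • 1 := by
  classical
  let := subAct ρ
  choose! χ hχ using hwN
  -- weight spaces
  let Ws : (N → F) → Submodule F W := fun ψ => ⨅ x : N, (ρ x).eigenspace (ψ x)
  have memWs : ∀ ψ v, v ∈ Ws ψ ↔ ∀ x : N, ρ x v = ψ x • v := by
    intro ψ v
    simp [Ws, Submodule.mem_iInf]
  have hind : iSupIndep Ws := by
    have h := Module.End.independent_iInf_maxGenEigenspace_of_forall_mapsTo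
      (fun x : N => ρ x) (by
        intro i j φ
        exact Module.End.mapsTo_maxGenEigenspace_of_comm (hcomm j j.2 i i.2) φ)
    refine h.mono ?_
    intro ψ
    refine iInf_mono fun x => ?_
    exact (Module.End.genEigenspace (ρ x) (ψ x)).monotone le_top
  have hinv : ∀ t, (ρ t) ∘ₗ (ρ t⁻¹) = LinearMap.id := by
    intro t
    have : ρ t * ρ t⁻¹ = 1 := by rw [← map_mul, mul_inv_cancel, map_one]
    exact this
  have hinv2 : ∀ t v, ρ t⁻¹ (ρ t v) = v := by
    intro t v
    have : ρ t⁻¹ * ρ t = 1 := by rw [← map_mul, inv_mul_cancel, map_one]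
    exact congrArg (fun f => f v) this
  have hinv3 : ∀ t v, ρ t (ρ t⁻¹ v) = v := by
    intro t v
    exact congrArg (fun f => f v) (hinv t)
  have hmul : ∀ s t v, ρ (s * t) v = ρ s (ρ t v) := by
    intro s t v; rw [map_mul]; rfl
  let U0 : Submodule F W := Ws (fun x => χ x)
  have hw0 : w ∈ U0 := by
    rw [memWs]; intro x; exact hχ x x.2
  -- translates of weight spaces are weight spaces
  have htrans : ∀ t ψ, (Ws ψ).map (ρ t) =
      Ws (fun x => ψ ⟨t⁻¹ * x * t, by
        have := hN.conj_mem x x.2 t⁻¹; simpa using this⟩) := by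
    intro t ψ
    ext v
    rw [memWs]
    constructor
    · rintro ⟨u, hu, rfl⟩ x
      have := (memWs _ _).1 hu ⟨t⁻¹ * x * t, by
        have := hN.conj_mem x x.2 t⁻¹; simpa using this⟩
      rw [← map_smul, ← this, ← hmul, ← hmul]
      congr 2
      simp only [mul_assoc, mul_inv_cancel_left]
    · intro hv
      refine ⟨ρ t⁻¹ v, ?_, hinv3 t v⟩
      refine (memWs _ _).2 fun x => ?_
      have := hv ⟨t * x * t⁻¹, hN.conj_mem x x.2 t⟩
      have hx : (⟨t⁻¹ * (t * (x : T) * t⁻¹) * t, by simp [mul_assoc]⟩ : N) = x := by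
        ext; simp [mul_assoc]
      simp only [hx] at this
      rw [← map_smul, ← this, ← hmul, ← hmul]
      congr 2
      simp [mul_assoc]
  let O := MulAction.orbit T U0
  have : Finite O := (Set.finite_range (fun t : T => t • U0)).to_subtype
  have : Fintype O := Fintype.ofFinite O
  have hOw : ∀ U : O, ∃ ψ, Ws ψ = U.1 := by
    rintro ⟨U, t, rfl⟩
    exact ⟨_, (htrans t _).symm⟩
  choose ψ hψ using hOw
  have hOind : iSupIndep (fun U : O => U.1) := by
    have : (fun U : O => U.1) = Ws ∘ ψ := by ext1 U; exact (hψ U).symm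
    rw [this]
    refine hind.comp ?_
    intro U U' h
    apply Subtype.ext
    rw [← hψ U, ← hψ U', h]
  have hOtop : iSup (fun U : O => U.1) = ⊤ := by
    apply hirr
    · intro hb
      have : U0 ≤ ⊥ := by
        rw [← hb]; exact le_iSup (fun U : O => U.1) ⟨U0, MulAction.mem_orbit_self U0⟩
      exact hw ((Submodule.mem_bot F).1 (this hw0))
    · intro t
      rw [Submodule.map_iSup]
      refine iSup_le ?_
      rintro ⟨U, s, rfl⟩
      refine le_trans (le_of_eq ?_) (le_iSup (fun U : O => U.1) ⟨(t * s) • U0, ⟨t * s, rfl⟩⟩)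
      exact (mul_smul t s U0).symm
  have hd : ∀ U : O, Module.finrank F U.1 = Module.finrank F U0 := by
    rintro ⟨U, t, rfl⟩
    change Module.finrank F (U0.map (ρ t)) = _
    exact (Submodule.equivMapOfInjective (ρ t) (fun u v h => by
      rw [← hinv2 t u, h, hinv2 t v]) U0).finrank_eq.symm
  have hsum := finrank_sum_of_indep _ hOind hOtop _ hd
  have hO3 : Fintype.card O ∣ 3 := by rw [hdim] at hsum; exact ⟨_, hsum⟩
  have hOT : Fintype.card O ∣ Nat.card T := by
    rw [← Nat.card_eq_fintype_card]; exact orbit_card_dvd U0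
  have hO1 : Fintype.card O = 1 := by
    rcases (Nat.dvd_prime Nat.prime_three).1 hO3 with h | h
    · exact h
    · rw [h] at hOT; exact absurd hOT h3
  have hU0 : U0 = ⊤ := by
    rw [← hOtop]
    apply le_antisymm
    · exact le_iSup (fun U : O => U.1) ⟨U0, MulAction.mem_orbit_self U0⟩
    · refine iSup_le fun U => ?_
      have := (Fintype.card_le_one_iff_subsingleton (α := O)).1 hO1.le
      rw [Subsingleton.elim U ⟨U0, MulAction.mem_orbit_self U0⟩]
  intro x hx
  refine ⟨χ x, ?_⟩
  ext v
  have : v ∈ U0 := by rw [hU0]; trivial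
  simpa using (memWs _ _).1 this ⟨x, hx⟩
end



section
variable {F W T : Type*} [Field F] [AddCommGroup W] [Module F W] [Group T]

/-- No group generated by a connected triple of reflections in dimension three is a solvable
`3'`-group of order prime to the characteristic. -/
lemma no_triple_rep [FiniteDimensional F W] [Finite T] [Group.IsSolvable T]
    (hdim : Module.finrank F W = 3)
    (h2 : (2 : F) ≠ 0) (h3 : ¬ 3 ∣ Nat.card T) (hp : (Nat.card T : F) ≠ 0)
    (ρ : T →* Module.End F W) (r s t : T) (hgen : Subgroup.closure {r, s, t} = ⊤)
    (a b c : W) (α β γ : W →ₗ[F] F)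
    (hspan : ∀ U : Submodule F W, a ∈ U → b ∈ U → c ∈ U → U = ⊤)
    (hr : ∀ v, ρ r v = v - α v • a) (hs : ∀ v, ρ s v = v - β v • b)
    (ht : ∀ v, ρ t v = v - γ v • c)
    (haa : α a = 2) (hbb : β b = 2) (hcc : γ c = 2)
    (hab : α b ≠ 0) (hba : β a ≠ 0) (hbc : β c ≠ 0) (hcb : γ b ≠ 0) : False := by
  classical
  have := Fintype.ofFinite T
  have hmul : ∀ s t v, ρ (s * t) v = ρ s (ρ t v) := by
    intro s t v; rw [map_mul]; rfl
  have hinv2 : ∀ t v, ρ t⁻¹ (ρ t v) = v := by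
    intro t v; rw [← hmul, inv_mul_cancel, map_one]; rfl
  have hinv3 : ∀ t v, ρ t (ρ t⁻¹ v) = v := by
    intro t v; rw [← hmul, mul_inv_cancel, map_one]; rfl
  -- no fixed vectors
  have hfix : ∀ u, ρ r u = u → ρ s u = u → ρ t u = u → u = 0 := by
    intro u hru hsu htu
    have hall : ∀ g : T, ρ g u = u := by
      intro g
      have hg : g ∈ Subgroup.closure {r, s, t} := by rw [hgen]; trivial
      induction hg using Subgroup.closure_induction with
      | mem x hx =>
        rcases hx with rfl | rfl | rfl <;> assumption
      | one => rw [map_one]; rfl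
      | mul x y _ _ hx hy => rw [hmul, hy, hx]
      | inv x _ hx =>
        conv_lhs => rw [← hx]
        exact hinv2 x u
    let P : W →ₗ[F] W := ∑ g : T, ρ g
    have hPg : ∀ (g : T) v, P (ρ g v) = P v := by
      intro g v
      simp only [P, LinearMap.sum_apply]
      rw [← Equiv.sum_comp (Equiv.mulRight g) (fun x => ρ x v)]
      refine Finset.sum_congr rfl fun x _ => ?_
      simp
    have hneg : ∀ (g : T) v, ρ g v = -v → P v = 0 := by
      intro g v h
      have h1 := hPg g v
      rw [h, map_neg] at h1
      have h3 : (2 : F) • P v = 0 := by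
        rw [two_smul]; nth_rewrite 1 [← h1]; simp
      exact (smul_eq_zero.1 h3).resolve_left h2
    have hker : LinearMap.ker P = ⊤ := by
      apply hspan
      · exact hneg r a (by rw [hr, haa, two_smul]; abel)
      · exact hneg s b (by rw [hs, hbb, two_smul]; abel)
      · exact hneg t c (by rw [ht, hcc, two_smul]; abel)
    have hPu : P u = 0 := by
      have : u ∈ LinearMap.ker P := by rw [hker]; trivial
      exact this
    have hPu2 : P u = (Nat.card T : F) • u := by
      simp only [P, LinearMap.sum_apply, hall]
      simp [Nat.cast_smul_eq_nsmul]
    rw [hPu2] at hPu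
    exact (smul_eq_zero.1 hPu).resolve_left hp
  have hstep : ∀ (U : Submodule F W) (g : T) (d e : W) (δ : W →ₗ[F] F), (∀ v, ρ g v = v - δ v • e) →
      U.map (ρ g) ≤ U → d ∈ U → δ d ≠ 0 → e ∈ U := by
    intro U g d e δ hg hU hd hne
    have h1 : ρ g d ∈ U := hU ⟨d, hd, rfl⟩
    rw [hg] at h1
    have h2 : δ d • e ∈ U := by
      have := U.sub_mem hd h1
      simpa using this
    have := U.smul_mem (δ d)⁻¹ h2
    rwa [smul_smul, inv_mul_cancel₀ hne, one_smul] at this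
  have hirr : ∀ U : Submodule F W, U ≠ ⊥ → (∀ t, U.map (ρ t) ≤ U) → U = ⊤ := by
    intro U hU hinv
    obtain ⟨u, hu, hu0⟩ := (Submodule.ne_bot_iff U).1 hU
    have hb : b ∈ U := by
      by_cases h1 : α u = 0
      · by_cases h2 : β u = 0
        · by_cases h3 : γ u = 0
          · exact absurd (hfix u (by simp [hr, h1]) (by simp [hs, h2]) (by simp [ht, h3])) hu0
          · have hc := hstep U t u c γ ht (hinv t) hu h3
            exact hstep U s c b β hs (hinv s) hc hbc
        · exact hstep U s u b β hs (hinv s) hu h2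
      · have ha := hstep U r u a α hr (hinv r) hu h1
        exact hstep U s a b β hs (hinv s) ha hba
    exact hspan U (hstep U r b a α hr (hinv r) hb hab) hb (hstep U t b c γ ht (hinv t) hb hcb)
  have ha0 : a ≠ 0 := by rintro rfl; simp at haa; exact h2 haa.symm
  have hb0 : b ≠ 0 := by rintro rfl; simp at hab
  have hc0 : c ≠ 0 := by rintro rfl; simp at hbc
  -- an operator commuting with the three reflections is scalar
  have hschur : ∀ f : Module.End F W, f * ρ r = ρ r * f → f * ρ s = ρ s * f → f * ρ t = ρ t * f →
      ∃ k : F, f = k • 1 := by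
    intro f h1 h2' h3'
    have e1 : ∀ v, α v • f a = α (f v) • a := by
      intro v
      have := congrArg (fun g => g v) h1
      simp only [Module.End.mul_apply, hr, map_sub, map_smul] at this
      exact sub_right_injective this
    have e2 : ∀ v, β v • f b = β (f v) • b := by
      intro v
      have := congrArg (fun g => g v) h2'
      simp only [Module.End.mul_apply, hs, map_sub, map_smul] at this
      exact sub_right_injective this
    have e3 : ∀ v, γ v • f c = γ (f v) • c := by
      intro v
      have := congrArg (fun g => g v) h3'
      simp only [Module.End.mul_apply, ht, map_sub, map_smul] at this
      exact sub_right_injective this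
    obtain ⟨k, hk⟩ : ∃ k : F, f b = k • b := by
      refine ⟨(β b)⁻¹ * β (f b), ?_⟩
      rw [mul_smul, ← e2, smul_smul, inv_mul_cancel₀ (by rw [hbb]; exact h2), one_smul]
    have hka : f a = k • a := by
      have := e1 b
      rw [hk, map_smul, smul_eq_mul, mul_comm, mul_smul] at this
      exact smul_right_injective W hab this
    have hkc : f c = k • c := by
      have := e3 b
      rw [hk, map_smul, smul_eq_mul, mul_comm, mul_smul] at this
      exact smul_right_injective W hcb this
    refine ⟨k, ?_⟩
    have : LinearMap.ker (f - k • 1) = ⊤ := by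
      apply hspan <;> simp [hk, hka, hkc]
    rw [LinearMap.ker_eq_top] at this
    exact sub_eq_zero.1 this
  let S : T → Prop := fun x => ∃ k : F, ρ x = k • 1
  have hS1 : S 1 := ⟨1, by simp⟩
  have hSr : ¬ S r := by
    rintro ⟨k, hk⟩
    have e1 : ρ r a = k • a := by rw [hk]; rfl
    have e2 : ρ r b = k • b := by rw [hk]; rfl
    have hk1 : k = -1 := by
      rw [hr, haa] at e1
      have : (k + 1) • a = 0 := by rw [add_smul, ← e1, two_smul, one_smul]; abel
      exact eq_neg_of_add_eq_zero_left ((smul_eq_zero.1 this).resolve_right ha0)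
    subst hk1
    rw [hr] at e2
    -- `b` is a multiple of `a`, so everything is in the span of `a` and `c`
    have hbmem : ∀ U : Submodule F W, a ∈ U → b ∈ U := by
      intro U hU
      have : (2 : F) • b = α b • a := by
        rw [two_smul]
        have := sub_eq_iff_eq_add.1 e2
        nth_rewrite 1 [this]
        simp
      have h' : (2 : F) • b ∈ U := by rw [this]; exact U.smul_mem _ hU
      have := U.smul_mem (2 : F)⁻¹ h'
      rwa [smul_smul, inv_mul_cancel₀ h2, one_smul] at this
    have htop := hspan (Submodule.span F {a, c}) (Submodule.subset_span (by simp))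
      (hbmem _ (Submodule.subset_span (by simp))) (Submodule.subset_span (by simp))
    have hle : Module.finrank F (Submodule.span F ({a, c} : Set W)) ≤ 2 := by
      have := finrank_span_finset_le_card (R := F) ({a, c} : Finset W)
      simp only [Finset.coe_insert, Finset.coe_singleton] at this
      exact this.trans Finset.card_le_two
    rw [htop, finrank_top, hdim] at hle
    omega
  obtain ⟨N, hN, ⟨x, hxN, hxS⟩, hcommS⟩ := exists_last_nonscalar S hS1 r hSr
  have hcomm : ∀ x ∈ N, ∀ y ∈ N, ρ x * ρ y = ρ y * ρ x := by
    intro x hx y hy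
    obtain ⟨k, hk⟩ := hcommS x hx y hy
    have hdet : LinearMap.det (ρ (x * y * x⁻¹ * y⁻¹)) = 1 := by
      have : ∀ g, LinearMap.det (ρ g) * LinearMap.det (ρ g⁻¹) = 1 := by
        intro g; rw [← map_mul, ← map_mul, mul_inv_cancel, map_one, map_one]
      simp only [map_mul]
      linear_combination (LinearMap.det (ρ y) * LinearMap.det (ρ y⁻¹)) * this x + this y
    have hk3 : k ^ 3 = 1 := by
      rw [hk, LinearMap.det_smul, hdim] at hdet
      simpa using hdet
    have hkT : k ^ Nat.card T = 1 := by
      have h1 : ρ ((x * y * x⁻¹ * y⁻¹) ^ Nat.card T) = 1 := by rw [pow_card_eq_one', map_one]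
      rw [map_pow, hk, smul_pow, one_pow] at h1
      have h2 := congrArg (fun f => f a) h1
      simp only [LinearMap.smul_apply, Module.End.one_apply] at h2
      have : (k ^ Nat.card T - 1) • a = 0 := by rw [sub_smul, h2, one_smul, sub_self]
      exact sub_eq_zero.1 ((smul_eq_zero.1 this).resolve_right ha0)
    have hk1 : k = 1 := by
      have hcop : Nat.Coprime 3 (Nat.card T) := (Nat.Prime.coprime_iff_not_dvd Nat.prime_three).2 h3
      have h := pow_gcd_eq_one.2 ⟨hk3, hkT⟩
      rwa [hcop, pow_one] at h
    rw [hk1, one_smul] at hk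
    have : ρ x * ρ y = ρ (x * y * x⁻¹ * y⁻¹) * (ρ y * ρ x) := by
      rw [← map_mul, ← map_mul, ← map_mul]
      congr 1
      group
    rw [this, hk, one_mul]
  -- find a reflection not commuting with `x`
  have hline : ∀ (g : T) (d : W) (δ : W →ₗ[F] F), (∀ v, ρ g v = v - δ v • d) →
      ρ x * ρ g ≠ ρ g * ρ x → ∃ w : W, w ≠ 0 ∧ ∀ z ∈ N, ∃ k : F, ρ z w = k • w := by
    intro g d δ hg hne
    let y := x * (g * x⁻¹ * g⁻¹)
    have hyN : y ∈ N := N.mul_mem hxN (hN.conj_mem _ (N.inv_mem hxN) g)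
    let D : Module.End F W := ρ y - 1
    have hDcomm : ∀ z ∈ N, ∀ v, ρ z (D v) = D (ρ z v) := by
      intro z hz v
      have := congrArg (fun f => f v) (hcomm z hz y hyN)
      simp only [Module.End.mul_apply] at this
      simp [D, this]
    have hD0 : D ≠ 0 := by
      intro h
      have hy1 : ρ y = 1 := sub_eq_zero.1 h
      apply hne
      have : ρ x * ρ g = ρ y * (ρ g * ρ x) := by
        simp only [← map_mul]; congr 1; simp only [y]; group
      rw [this, hy1, one_mul]
    have hker : LinearMap.ker D ≠ ⊥ := by
      let L : W →ₗ[F] (F × F) := δ.prod (δ.comp (ρ x⁻¹))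
      have hL : LinearMap.ker L ≠ ⊥ := by
        apply LinearMap.ker_ne_bot_of_finrank_lt
        rw [hdim]; simp
      obtain ⟨v, hv, hv0⟩ := (Submodule.ne_bot_iff _).1 hL
      refine (Submodule.ne_bot_iff _).2 ⟨v, ?_, hv0⟩
      have hv1 : δ v = 0 ∧ δ (ρ x⁻¹ v) = 0 := by
        have : L v = 0 := hv
        simpa [L] using this
      have e1 : ρ g v = v := by simp [hg, hv1.1]
      have e2 : ρ g⁻¹ v = v := by
        conv_lhs => rw [← e1]
        exact hinv2 g v
      have e3 : ρ g (ρ x⁻¹ v) = ρ x⁻¹ v := by simp [hg, hv1.2]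
      have e4 : ρ y v = v := by
        simp only [y, hmul, e2, e3, hinv3]
      simp [D, e4]
    have hrn := LinearMap.finrank_range_add_finrank_ker D
    rw [hdim] at hrn
    have hk1 : 0 < Module.finrank F (LinearMap.ker D) :=
      Nat.pos_of_ne_zero fun h => hker (Submodule.finrank_eq_zero.1 h)
    have hr1 : 0 < Module.finrank F (LinearMap.range D) :=
      Nat.pos_of_ne_zero fun h => hD0 (LinearMap.range_eq_bot.1 (Submodule.finrank_eq_zero.1 h))
    obtain ⟨U, hU1, hUN⟩ : ∃ U : Submodule F W, Module.finrank F U = 1 ∧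
        ∀ z ∈ N, ∀ u ∈ U, ρ z u ∈ U := by
      by_cases h : Module.finrank F (LinearMap.ker D) = 1
      · refine ⟨_, h, ?_⟩
        intro z hz u hu
        rw [LinearMap.mem_ker] at hu ⊢
        rw [← hDcomm z hz, hu, map_zero]
      · refine ⟨LinearMap.range D, by omega, ?_⟩
        rintro z hz _ ⟨v, rfl⟩
        exact ⟨ρ z v, (hDcomm z hz v).symm⟩
    obtain ⟨w, hw0, hw⟩ := finrank_eq_one_iff'.1 hU1
    refine ⟨w, by simpa using hw0, ?_⟩
    intro z hz
    obtain ⟨k, hk⟩ := hw ⟨ρ z w, hUN z hz w w.2⟩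
    exact ⟨k, (congrArg Subtype.val hk).symm⟩
  have hex : ∃ w : W, w ≠ 0 ∧ ∀ z ∈ N, ∃ k : F, ρ z w = k • w := by
    by_cases h1 : ρ x * ρ r = ρ r * ρ x
    · by_cases h2 : ρ x * ρ s = ρ s * ρ x
      · by_cases h3 : ρ x * ρ t = ρ t * ρ x
        · exact absurd (hschur _ h1 h2 h3) hxS
        · exact hline t c γ ht h3
      · exact hline s b β hs h2
    · exact hline r a α hr h1
  obtain ⟨w, hw0, hw⟩ := hex
  exact hxS (clifford3 hdim h3 ρ hirr N hN hcomm w hw0 hw x hxN)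
end



section
variable {n : ℕ} {F : Type*} [Field F]

/-- `H` contains the reflection `v ↦ v - α(v) a`. -/
def HasRefl (H : Subgroup (GL (Fin n) F)) (a : Fin n → F) (α : (Fin n → F) →ₗ[F] F) : Prop :=
  α a = 2 ∧ ∃ s ∈ H, ∀ v, (s : Matrix (Fin n) (Fin n) F) *ᵥ v = v - α v • a

lemma HasRefl.symm_zero [Finite F] {H : Subgroup (GL (Fin n) F)} {a b : Fin n → F}
    {α β : (Fin n → F) →ₗ[F] F} (h2 : (2 : F) ≠ 0) (hp : (Nat.card H : F) ≠ 0)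
    (hα : HasRefl H a α) (hβ : HasRefl H b β) (h : α b = 0) : β a = 0 := by
  obtain ⟨haa, r, hr, hrv⟩ := hα
  obtain ⟨hbb, s, hs, hsv⟩ := hβ
  by_contra hm
  set m := β a with hmdef
  let g := (s * r) ^ 2
  have hmulv : ∀ (x y : GL (Fin n) F) (v : Fin n → F),
      ((x * y : GL (Fin n) F) : Matrix (Fin n) (Fin n) F) *ᵥ v =
      (x : Matrix (Fin n) (Fin n) F) *ᵥ ((y : Matrix (Fin n) (Fin n) F) *ᵥ v) := by
    intro x y v; rw [Units.val_mul, Matrix.mulVec_mulVec]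
  have hgb : (g : Matrix (Fin n) (Fin n) F) *ᵥ b = b := by
    simp only [g, pow_two, hmulv, hrv, hsv, map_sub, map_smul, h, hbb, haa, ← hmdef, smul_eq_mul]
    module
  have hga : (g : Matrix (Fin n) (Fin n) F) *ᵥ a = a - (2 * m) • b := by
    simp only [g, pow_two, hmulv, hrv, hsv, map_sub, map_smul, h, hbb, haa, ← hmdef, smul_eq_mul]
    module
  have hpow : ∀ k : ℕ, ((g ^ k : GL (Fin n) F) : Matrix (Fin n) (Fin n) F) *ᵥ a
      = a - ((k : F) * (2 * m)) • b := by
    intro k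
    induction k with
    | zero => simp
    | succ k ih =>
      rw [pow_succ', hmulv, ih, Matrix.mulVec_sub, Matrix.mulVec_smul, hga, hgb]
      push_cast
      module
  have hgH : g ∈ H := H.pow_mem (H.mul_mem hs hr) 2
  have hg1 : g ^ Nat.card H = 1 := by
    have := pow_card_eq_one' (x := (⟨g, hgH⟩ : H))
    exact congrArg Subtype.val this
  have := hpow (Nat.card H)
  rw [hg1, Units.val_one, Matrix.one_mulVec] at this
  have h0 : ((Nat.card H : F) * (2 * m)) • b = 0 := by
    have := congrArg (fun z => a - z) this
    simpa using this.symm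
  have hb0 : b ≠ 0 := by rintro rfl; simp at hbb; exact h2 hbb.symm
  rcases smul_eq_zero.1 h0 with h | h
  · exact (mul_ne_zero hp (mul_ne_zero h2 hm)) h
  · exact hb0 h

lemma HasRefl.no_triple [Finite F] {H : Subgroup (GL (Fin n) F)} {a b c : Fin n → F}
    {α β γ : (Fin n → F) →ₗ[F] F} (h2 : (2 : F) ≠ 0) (hp : (Nat.card H : F) ≠ 0)
    (h3 : ¬ 3 ∣ Nat.card H) (hsolv : Group.IsSolvable H)
    (hα : HasRefl H a α) (hβ : HasRefl H b β) (hγ : HasRefl H c γ)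
    (hba : β a ≠ 0) (hbc : β c ≠ 0)
    (hli : LinearIndependent F ![a, b, c]) : False := by
  classical
  have hab : α b ≠ 0 := fun h => hba (hα.symm_zero h2 hp hβ h)
  have hcb : γ b ≠ 0 := fun h => hbc (hγ.symm_zero h2 hp hβ h)
  obtain ⟨haa, r, hr, hrv⟩ := hα
  obtain ⟨hbb, s, hs, hsv⟩ := hβ
  obtain ⟨hcc, t, ht, htv⟩ := hγ
  have hmulv : ∀ (x y : GL (Fin n) F) (v : Fin n → F),
      ((x * y : GL (Fin n) F) : Matrix (Fin n) (Fin n) F) *ᵥ v =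
      (x : Matrix (Fin n) (Fin n) F) *ᵥ ((y : Matrix (Fin n) (Fin n) F) *ᵥ v) := by
    intro x y v; rw [Units.val_mul, Matrix.mulVec_mulVec]
  let K : Subgroup (GL (Fin n) F) := Subgroup.closure {r, s, t}
  have hKH : K ≤ H := by
    rw [Subgroup.closure_le]
    rintro x (rfl | rfl | rfl) <;> assumption
  have hcard : Nat.card K ∣ Nat.card H := Subgroup.card_dvd_of_le hKH
  have hKs : Group.IsSolvable K :=
    Group.isSolvable_of_isSolvable_injective (Subgroup.inclusion_injective hKH)
  let W : Submodule F (Fin n → F) := Submodule.span F (Set.range ![a, b, c])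
  have hrange : Set.range ![a, b, c] = {a, b, c} := by
    ext v
    simp [eq_comm]
    tauto
  have haW : a ∈ W := Submodule.subset_span ⟨0, rfl⟩
  have hbW : b ∈ W := Submodule.subset_span ⟨1, rfl⟩
  have hcW : c ∈ W := Submodule.subset_span ⟨2, rfl⟩
  have hdim : Module.finrank F W = 3 := by
    simpa using finrank_span_eq_card hli
  have hKW : ∀ x : K, ∀ v ∈ W, Matrix.mulVecLin ((x : GL (Fin n) F) : Matrix (Fin n) (Fin n) F) v ∈ W := by
    rintro ⟨x, hx⟩
    simp only [Matrix.mulVecLin_apply]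
    have hgen : ∀ (g : GL (Fin n) F) (d : Fin n → F) (δ : (Fin n → F) →ₗ[F] F), d ∈ W →
        (∀ v, (g : Matrix (Fin n) (Fin n) F) *ᵥ v = v - δ v • d) →
        ∀ v ∈ W, (g : Matrix (Fin n) (Fin n) F) *ᵥ v ∈ W := by
      intro g d δ hd hg v hv
      rw [hg]
      exact W.sub_mem hv (W.smul_mem _ hd)
    have hxs : x ∈ Submonoid.closure ({r, s, t} : Set (GL (Fin n) F)) := by
      have : x ∈ (Subgroup.closure ({r, s, t} : Set (GL (Fin n) F))) := hx
      rwa [← Subgroup.mem_toSubmonoid, Subgroup.closure_toSubmonoid_of_finite] at this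
    clear hx
    induction hxs using Submonoid.closure_induction with
    | mem x hx =>
      rcases hx with rfl | rfl | rfl
      · exact hgen _ a α haW hrv
      · exact hgen _ b β hbW hsv
      · exact hgen _ c γ hcW htv
    | one => intro v hv; simpa using hv
    | mul x y _ _ hx hy =>
      intro v hv
      rw [hmulv]
      exact hx _ (hy _ hv)
  let ρ : K →* Module.End F W :=
    { toFun := fun x => (Matrix.mulVecLin ((x : GL (Fin n) F) : Matrix (Fin n) (Fin n) F)).restrict (hKW x)
      map_one' := by
        ext v : 2
        simp
      map_mul' := by
        intro x y
        ext v : 2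
        simp }
  have hρ : ∀ (x : K) (v : W), ((ρ x v : W) : Fin n → F) =
      ((x : GL (Fin n) F) : Matrix (Fin n) (Fin n) F) *ᵥ (v : Fin n → F) := by
    intro x v; rfl
  have hrK : r ∈ K := Subgroup.subset_closure (by simp)
  have hsK : s ∈ K := Subgroup.subset_closure (by simp)
  have htK : t ∈ K := Subgroup.subset_closure (by simp)
  have hgen : Subgroup.closure {(⟨r, hrK⟩ : K), ⟨s, hsK⟩, ⟨t, htK⟩} = ⊤ := by
    have := Subgroup.closure_closure_coe_preimage (k := ({r, s, t} : Set (GL (Fin n) F)))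
    rw [← this]
    congr 1
    ext x
    simp [Subtype.ext_iff]
  refine no_triple_rep (F := F) (W := W) (T := K) hdim h2 (fun h => h3 (h.trans hcard)) ?_ ρ
    ⟨r, hrK⟩ ⟨s, hsK⟩ ⟨t, htK⟩ hgen ⟨a, haW⟩ ⟨b, hbW⟩ ⟨c, hcW⟩
    (α.domRestrict W) (β.domRestrict W) (γ.domRestrict W) ?_ ?_ ?_ ?_ haa hbb hcc hab hba hbc hcb
  · intro h
    obtain ⟨k, hk⟩ := hcard
    apply hp
    rw [hk, Nat.cast_mul, h, zero_mul]
  · intro U h1 h2 h3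
    have hle : W ≤ U.map W.subtype := by
      rw [Submodule.span_le, hrange]
      rintro x (rfl | rfl | rfl)
      · exact ⟨_, h1, rfl⟩
      · exact ⟨_, h2, rfl⟩
      · exact ⟨_, h3, rfl⟩
    rw [eq_top_iff]
    rintro ⟨v, hv⟩ -
    obtain ⟨u, hu, huv⟩ := hle hv
    have : u = ⟨v, hv⟩ := Subtype.ext huv
    rwa [← this]
  · intro v; apply Subtype.ext; rw [hρ]; exact hrv v
  · intro v; apply Subtype.ext; rw [hρ]; exact hsv v
  · intro v; apply Subtype.ext; rw [hρ]; exact htv v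

end



section
variable {n : ℕ} {F : Type*} [Field F]

/-- `H` contains all the diagonal reflections. -/
def HasDiag (H : Subgroup (GL (Fin n) F)) : Prop :=
  ∀ i, ∃ r ∈ H, (r : Matrix (Fin n) (Fin n) F) = Matrix.diagonal (fun k => if k = i then -1 else 1)

/-- coroot functional of the column `j` of `g` -/
noncomputable def coroot (g : GL (Fin n) F) (j : Fin n) : (Fin n → F) →ₗ[F] F :=
  (2 : F) • (LinearMap.proj j ∘ₗ
    Matrix.mulVecLin ((g⁻¹ : GL (Fin n) F) : Matrix (Fin n) (Fin n) F))

lemma coroot_apply (g : GL (Fin n) F) (j : Fin n) (v : Fin n → F) :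
    coroot g j v = 2 * (((g⁻¹ : GL (Fin n) F) : Matrix (Fin n) (Fin n) F) *ᵥ v) j := by
  simp [coroot]

lemma hasRefl_col {H : Subgroup (GL (Fin n) F)} (hE : HasDiag H) (g : GL (Fin n) F) (hg : g ∈ H)
    (j : Fin n) : HasRefl H (fun i => (g : Matrix (Fin n) (Fin n) F) i j) (coroot g j) := by
  have hcol : (fun i => (g : Matrix (Fin n) (Fin n) F) i j) =
      (g : Matrix (Fin n) (Fin n) F) *ᵥ (Pi.single j 1) := by
    ext i; simp
  have hinv : ∀ v, ((g⁻¹ : GL (Fin n) F) : Matrix (Fin n) (Fin n) F) *ᵥ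
      ((g : Matrix (Fin n) (Fin n) F) *ᵥ v) = v := by
    intro v; rw [Matrix.mulVec_mulVec, ← Units.val_mul, inv_mul_cancel, Units.val_one, Matrix.one_mulVec]
  have hinv' : ∀ v, (g : Matrix (Fin n) (Fin n) F) *ᵥ
      (((g⁻¹ : GL (Fin n) F) : Matrix (Fin n) (Fin n) F) *ᵥ v) = v := by
    intro v; rw [Matrix.mulVec_mulVec, ← Units.val_mul, mul_inv_cancel, Units.val_one, Matrix.one_mulVec]
  obtain ⟨r, hr, hrd⟩ := hE j
  refine ⟨?_, g * r * g⁻¹, H.mul_mem (H.mul_mem hg hr) (H.inv_mem hg), ?_⟩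
  · rw [coroot_apply, hcol, hinv]; simp
  · intro v
    rw [Units.val_mul, Units.val_mul, ← Matrix.mulVec_mulVec, ← Matrix.mulVec_mulVec, hrd]
    have : Matrix.diagonal (fun k => if k = j then (-1 : F) else 1) *ᵥ
        (((g⁻¹ : GL (Fin n) F) : Matrix (Fin n) (Fin n) F) *ᵥ v) =
        (((g⁻¹ : GL (Fin n) F) : Matrix (Fin n) (Fin n) F) *ᵥ v) -
          coroot g j v • Pi.single j 1 := by
      ext i
      rw [Matrix.mulVec_diagonal, coroot_apply]
      by_cases h : i = j
      · subst h; simp; ring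
      · simp [h]
    rw [this, Matrix.mulVec_sub, Matrix.mulVec_smul, hinv', hcol]

lemma hasRefl_std {H : Subgroup (GL (Fin n) F)} (hE : HasDiag H) (i : Fin n) :
    HasRefl H (Pi.single i 1) (coroot 1 i) := by
  have := hasRefl_col hE 1 H.one_mem i
  convert this using 1
  ext k
  simp [Matrix.one_apply, Pi.single_apply]

variable [Finite F] {H : Subgroup (GL (Fin n) F)} (h2 : (2 : F) ≠ 0)
  (hp : (Nat.card H : F) ≠ 0) (h3 : ¬ 3 ∣ Nat.card H) (hsolv : Group.IsSolvable H) (hE : HasDiag H)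

include h2 hp hE in
lemma inv_supp (g : GL (Fin n) F) (hg : g ∈ H) (i j : Fin n) :
    (g : Matrix (Fin n) (Fin n) F) i j ≠ 0 ↔
    ((g⁻¹ : GL (Fin n) F) : Matrix (Fin n) (Fin n) F) j i ≠ 0 := by
  have hA := hasRefl_col hE g hg j
  have hB := hasRefl_std hE i
  have e1 : coroot 1 i (fun i => (g : Matrix (Fin n) (Fin n) F) i j) =
      2 * (g : Matrix (Fin n) (Fin n) F) i j := by
    rw [coroot_apply]; simp
  have e2 : coroot g j (Pi.single i 1) =
      2 * ((g⁻¹ : GL (Fin n) F) : Matrix (Fin n) (Fin n) F) j i := by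
    rw [coroot_apply]; simp
  constructor
  · intro h h0
    have := hA.symm_zero h2 hp hB (by rw [e2, h0, mul_zero])
    rw [e1] at this
    exact h ((mul_eq_zero.1 this).resolve_left h2)
  · intro h h0
    have := hB.symm_zero h2 hp hA (by rw [e1, h0, mul_zero])
    rw [e2] at this
    exact h ((mul_eq_zero.1 this).resolve_left h2)

include h2 hp h3 hsolv hE in
lemma col_supp (g : GL (Fin n) F) (hg : g ∈ H) (i k l j : Fin n)
    (hik : i ≠ k) (hil : i ≠ l) (hkl : k ≠ l)
    (hi : (g : Matrix (Fin n) (Fin n) F) i j ≠ 0) (hk : (g : Matrix (Fin n) (Fin n) F) k j ≠ 0)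
    (hl : (g : Matrix (Fin n) (Fin n) F) l j ≠ 0) : False := by
  have hA := hasRefl_col hE g hg j
  refine HasRefl.no_triple h2 hp h3 hsolv (hasRefl_std hE i) hA (hasRefl_std hE k) ?_ ?_ ?_
  · rw [coroot_apply]; simpa [h2] using (inv_supp h2 hp hE g hg i j).1 hi
  · rw [coroot_apply]; simpa [h2] using (inv_supp h2 hp hE g hg k j).1 hk
  · rw [Fintype.linearIndependent_iff]
    intro c hc
    have hl' := congrFun hc l
    have hi' := congrFun hc i
    have hk' := congrFun hc k
    simp [Fin.sum_univ_three, Pi.single_apply, hil.symm, hkl.symm, hik, hik.symm, hl] at hl' hi' hk'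
    simp [hl'] at hi' hk'
    intro m
    fin_cases m <;> simp [*]

include h2 hp h3 hsolv hE in
lemma path_supp (g h : GL (Fin n) F) (hg : g ∈ H) (hh : h ∈ H) (i k m j j' : Fin n)
    (hik : i ≠ k) (him : i ≠ m) (hkm : k ≠ m)
    (hi : (g : Matrix (Fin n) (Fin n) F) i j ≠ 0) (hk : (g : Matrix (Fin n) (Fin n) F) k j ≠ 0)
    (hk2 : (h : Matrix (Fin n) (Fin n) F) k j' ≠ 0) (hm : (h : Matrix (Fin n) (Fin n) F) m j' ≠ 0) :
    False := by
  have hgm : (g : Matrix (Fin n) (Fin n) F) m j = 0 := by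
    by_contra hc
    exact col_supp h2 hp h3 hsolv hE g hg i k m j hik him hkm hi hk hc
  have hhi : (h : Matrix (Fin n) (Fin n) F) i j' = 0 := by
    by_contra hc
    exact col_supp h2 hp h3 hsolv hE h hh i k m j' hik him hkm hc hk2 hm
  refine HasRefl.no_triple h2 hp h3 hsolv (hasRefl_col hE g hg j) (hasRefl_std hE k)
    (hasRefl_col hE h hh j') ?_ ?_ ?_
  · rw [coroot_apply]; simpa [h2] using hk
  · rw [coroot_apply]; simpa [h2] using hk2
  · rw [Fintype.linearIndependent_iff]
    intro c hc
    have hl' := congrFun hc m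
    have hi' := congrFun hc i
    have hk' := congrFun hc k
    simp [Fin.sum_univ_three, Pi.single_apply, him.symm, hkm.symm, hik, hik.symm, hi, hgm, hhi, hm] at hl' hi' hk'
    simp [hl', hi'] at hk'
    intro m
    fin_cases m <;> simp [*]

/-- The block relation. -/
def blk (H : Subgroup (GL (Fin n) F)) (i k : Fin n) : Prop :=
  ∃ g ∈ H, ∃ j, (g : Matrix (Fin n) (Fin n) F) i j ≠ 0 ∧ (g : Matrix (Fin n) (Fin n) F) k j ≠ 0

lemma blk_refl (i : Fin n) : blk H i i := ⟨1, H.one_mem, i, by simp⟩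

lemma blk_symm {i k : Fin n} : blk H i k → blk H k i := by
  rintro ⟨g, hg, j, h1, h2⟩; exact ⟨g, hg, j, h2, h1⟩

include h2 hp h3 hsolv hE in
lemma blk_three {i k m : Fin n} (h1 : blk H i k) (h1' : blk H k m) (hik : i ≠ k) (him : i ≠ m)
    (hkm : k ≠ m) : False := by
  obtain ⟨g, hg, j, ha, hb⟩ := h1
  obtain ⟨h, hh, j', hc, hd⟩ := h1'
  exact path_supp h2 hp h3 hsolv hE g h hg hh i k m j j' hik him hkm ha hb hc hd

include h2 hp h3 hsolv hE in
lemma blk_trans {i k m : Fin n} (h1 : blk H i k) (h1' : blk H k m) : blk H i m := by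
  by_cases hik : i = k
  · subst hik; exact h1'
  by_cases hkm : k = m
  · subst hkm; exact h1
  by_cases him : i = m
  · subst him; exact blk_refl i
  exact (blk_three h2 hp h3 hsolv hE h1 h1' hik him hkm).elim

include h2 hp h3 hsolv hE in
lemma blk_map (g : GL (Fin n) F) (hg : g ∈ H) (i i' j j' : Fin n)
    (h : (g : Matrix (Fin n) (Fin n) F) i j ≠ 0) (h' : (g : Matrix (Fin n) (Fin n) F) i' j' ≠ 0)
    (hj : blk H j j') : blk H i i' := by
  obtain ⟨x, hx, l, hjl, hjl'⟩ := hj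
  have key : ∀ j, (x : Matrix (Fin n) (Fin n) F) j l ≠ 0 →
      ∃ m, (g : Matrix (Fin n) (Fin n) F) m j ≠ 0 ∧
        ((g * x : GL (Fin n) F) : Matrix (Fin n) (Fin n) F) m l ≠ 0 := by
    intro j hj
    have h1 := (inv_supp h2 hp hE x hx j l).1 hj
    have h4 : x⁻¹ = (g * x)⁻¹ * g := by group
    rw [h4, Units.val_mul, Matrix.mul_apply] at h1
    obtain ⟨m, -, hm⟩ := Finset.exists_ne_zero_of_sum_ne_zero h1
    refine ⟨m, right_ne_zero_of_mul hm, ?_⟩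
    exact (inv_supp h2 hp hE (g * x) (H.mul_mem hg hx) m l).2 (left_ne_zero_of_mul hm)
  obtain ⟨m, hm1, hm2⟩ := key j hjl
  obtain ⟨m', hm1', hm2'⟩ := key j' hjl'
  have t := @blk_trans n F _ _ H h2 hp h3 hsolv hE
  exact t (t ⟨g, hg, j, h, hm1⟩ ⟨g * x, H.mul_mem hg hx, l, hm2, hm2'⟩) ⟨g, hg, j', hm1', h'⟩

include h2 hp h3 hsolv hE in
lemma blk_iff (g : GL (Fin n) F) (hg : g ∈ H) (i i' j j' : Fin n)
    (h : (g : Matrix (Fin n) (Fin n) F) i j ≠ 0) (h' : (g : Matrix (Fin n) (Fin n) F) i' j' ≠ 0) :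
    blk H i i' ↔ blk H j j' := by
  constructor
  · intro hi
    exact blk_map h2 hp h3 hsolv hE g⁻¹ (H.inv_mem hg) j j' i i'
      ((inv_supp h2 hp hE g hg i j).1 h) ((inv_supp h2 hp hE g hg i' j').1 h') hi
  · exact blk_map h2 hp h3 hsolv hE g hg i i' j j' h h'
end



lemma exists_block_order {n : ℕ} (s : Setoid (Fin n)) :
    ∃ (b : Fin n → ℕ) (pr : Fin n → Fin n), (∀ i j, s i j ↔ b i = b j) ∧
      (∀ j, 0 < b j → b (pr j) + 1 = b j) ∧
      (∀ j k, 0 < b j → 0 < b k → pr j = pr k → j = k) := by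
  classical
  let C : Fin n → Finset (Fin n) := fun i => Finset.univ.filter (fun j => s i j)
  let c : Fin n → ℕ := fun i => ((C i).filter (fun j => j < i)).card
  let rep : Fin n → Fin n := fun i => Quotient.out (Quotient.mk s i)
  let key : Fin n → ℕ := fun i => (n - (C i).card) * n + rep i
  let K : Finset ℕ := Finset.univ.image key
  let b : Fin n → ℕ := fun i => (K.filter (fun m => m < key i)).card
  have hC : ∀ i j, s i j → C i = C j := by
    intro i j h
    ext k
    simp only [C, Finset.mem_filter, Finset.mem_univ, true_and]
    exact ⟨fun h' => s.trans (s.symm h) h', fun h' => s.trans h h'⟩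
  have hmem : ∀ i j, j ∈ C i ↔ s i j := by intro i j; simp [C]
  have hkey : ∀ i j, s i j ↔ key i = key j := by
    intro i j
    constructor
    · intro h
      have h1 : rep i = rep j := by
        simp only [rep]; rw [Quotient.sound h]
      simp only [key, hC i j h, h1]
    · intro h
      have h1 : (rep i : ℕ) = rep j := by
        have := congrArg (· % n) h
        simpa [key, Nat.mul_add_mod', Nat.mod_eq_of_lt (rep i).2, Nat.mod_eq_of_lt (rep j).2] using this
      have h2 : rep i = rep j := Fin.ext h1
      have h3 := congrArg (Quotient.mk s) h2
      simp only [rep, Quotient.out_eq] at h3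
      exact Quotient.exact h3
  have hbmono : ∀ i j, key i < key j → b i < b j := by
    intro i j h
    apply Finset.card_lt_card
    rw [Finset.ssubset_iff_of_subset]
    · exact ⟨key i, by simp [K, h], by simp⟩
    · intro m hm
      simp only [Finset.mem_filter] at hm ⊢
      exact ⟨hm.1, hm.2.trans h⟩
  have hb : ∀ i j, s i j ↔ b i = b j := by
    intro i j
    rw [hkey]
    constructor
    · intro h; simp only [b, h]
    · intro h
      rcases lt_trichotomy (key i) (key j) with h1 | h1 | h1
      · have := hbmono _ _ h1; omega
      · exact h1
      · have := hbmono _ _ h1; omega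
  have hcmono : ∀ i j, s i j → i < j → c i < c j := by
    intro i j h hij
    apply Finset.card_lt_card
    rw [Finset.ssubset_iff_of_subset]
    · refine ⟨i, ?_, by simp⟩
      simp only [Finset.mem_filter, hmem, hij, and_true]; exact s.symm h
    · rw [hC i j h]
      intro m hm
      simp only [Finset.mem_filter] at hm ⊢
      exact ⟨hm.1, hm.2.trans hij⟩
  have hcinj : ∀ i j, s i j → c i = c j → i = j := by
    intro i j h hc
    rcases lt_trichotomy i j with h1 | h1 | h1
    · have := hcmono _ _ h h1; omega
    · exact h1
    · have := hcmono _ _ (s.symm h) h1; omega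
  have hclt : ∀ i, c i < (C i).card := by
    intro i
    apply Finset.card_lt_card
    rw [Finset.ssubset_iff_of_subset (Finset.filter_subset _ _)]
    exact ⟨i, (hmem i i).2 (s.refl i), by simp⟩
  have hcsurj : ∀ i m, m < (C i).card → ∃ j, s i j ∧ c j = m := by
    intro i m hm
    have h1 : (C i).image c = Finset.range (C i).card := by
      apply Finset.eq_of_subset_of_card_le
      · intro x hx
        obtain ⟨j, hj, rfl⟩ := Finset.mem_image.1 hx
        rw [Finset.mem_range, hC i j ((hmem _ _).1 hj)]
        exact hclt j
      · rw [Finset.card_range, Finset.card_image_of_injOn]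
        intro x hx y hy hxy
        exact hcinj x y (s.trans (s.symm ((hmem _ _).1 hx)) ((hmem _ _).1 hy)) hxy
    have h2 : m ∈ (C i).image c := by rw [h1]; simpa using hm
    obtain ⟨j, hj, hjm⟩ := Finset.mem_image.1 h2
    exact ⟨j, (hmem _ _).1 hj, hjm⟩
  have hpr : ∀ j, ∃ i, 0 < b j → (b i + 1 = b j ∧ c i = c j) := by
    intro j
    by_cases h0 : 0 < b j
    swap
    · exact ⟨j, fun h => absurd h h0⟩
    have hne : (K.filter (fun m => m < key j)).Nonempty := Finset.card_pos.1 h0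
    obtain ⟨m, hm, hmax⟩ := Finset.exists_max_image _ (fun m => m) hne
    obtain ⟨hmK, hmj⟩ := Finset.mem_filter.1 hm
    obtain ⟨i', -, rfl⟩ := Finset.mem_image.1 hmK
    have hb1 : b i' + 1 = b j := by
      have : K.filter (fun m => m < key j) = insert (key i') (K.filter (fun m => m < key i')) := by
        ext m
        simp only [Finset.mem_filter, Finset.mem_insert]
        constructor
        · rintro ⟨h1, h2⟩
          have := hmax m (Finset.mem_filter.2 ⟨h1, h2⟩)
          rcases this.lt_or_eq with h | h
          · exact Or.inr ⟨h1, h⟩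
          · exact Or.inl h
        · rintro (rfl | ⟨h1, h2⟩)
          · exact ⟨hmK, hmj⟩
          · exact ⟨h1, h2.trans hmj⟩
      simp only [b]
      rw [this, Finset.card_insert_of_notMem (by simp)]
    have hcard : (C j).card ≤ (C i').card := by
      by_contra hlt
      push Not at hlt
      have h5 : (C j).card ≤ n := by simpa using Finset.card_le_univ (C j)
      have h6 : n - (C i').card ≥ n - (C j).card + 1 := by omega
      have h7 : (n - (C j).card + 1) * n ≤ (n - (C i').card) * n := Nat.mul_le_mul_right _ h6
      have h8 := (rep j).2
      have h9 : key j < key i' := by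
        simp only [key]
        rw [add_mul] at h7
        omega
      omega
    obtain ⟨i, hi, hci⟩ := hcsurj i' (c j) ((hclt j).trans_le hcard)
    exact ⟨i, fun _ => ⟨by rw [← (hb i' i).1 hi]; exact hb1, hci⟩⟩
  choose pr hpr using hpr
  refine ⟨b, pr, hb, fun j hj => (hpr j hj).1, ?_⟩
  intro j k hj hk h
  have h1 := hpr j hj
  have h2 := hpr k hk
  rw [h] at h1
  refine hcinj j k ((hb j k).2 ?_) ?_
  · omega
  · omega

section
variable {n : ℕ} {F : Type*} [Field F]

/-- block-monomial shape -/
structure BM (b : Fin n → ℕ) (g : Matrix (Fin n) (Fin n) F) : Prop where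
  iff : ∀ i i' j j', g i j ≠ 0 → g i' j' ≠ 0 → (b i = b i' ↔ b j = b j')
  col : ∀ j, ∃ i, g i j ≠ 0

lemma chain_aux (b : Fin n → ℕ) (pr : Fin n → Fin n)
    (hpr : ∀ j, 0 < b j → b (pr j) + 1 = b j)
    (P : Matrix (Fin n) (Fin n) F)
    (hA : ∀ (g : Matrix (Fin n) (Fin n) F) i j, (P * g) i j ≠ 0 → ∃ k, b k = b i + 1 ∧ g k j ≠ 0)
    (hB : ∀ (g : Matrix (Fin n) (Fin n) F) i j, 0 < b i → (P * g) (pr i) j = g i j)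
    (hC : ∀ (g : Matrix (Fin n) (Fin n) F) i j, (g * P) i j ≠ 0 → ∃ k, b k + 1 = b j ∧ g i k ≠ 0)
    (g g' : Matrix (Fin n) (Fin n) F) (hg : BM b g) (hg' : BM b g')
    (h : (1 + P) * g = g' * (1 + P)) :
    ∀ N i j, b j = N → (g i j ≠ 0 → b i = N) ∧ g i j = g' i j := by
  have heq : ∀ i j, g i j + (P * g) i j = g' i j + (g' * P) i j := by
    intro i j
    have := congrFun (congrFun h i) j
    simpa [add_mul, mul_add] using this
  intro N
  induction N using Nat.strong_induction_on with
  | _ N ih =>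
  -- lower bound on the image of block N
  have hge : ∀ i j, b j = N → g i j ≠ 0 → N ≤ b i := by
    intro i j hj hij
    by_contra hlt
    push Not at hlt
    obtain ⟨i', hi'⟩ := hg.col i
    have h1 := (ih (b i) hlt i' i rfl).1 hi'
    have := (hg.iff i i' j i hij hi').1 h1.symm
    omega
  have hge' : ∀ i j, b j = N → g' i j ≠ 0 → N ≤ b i := by
    intro i j hj hij
    by_contra hlt
    push Not at hlt
    obtain ⟨i', hi'⟩ := hg'.col i
    have h0 := ih (b i) hlt i' i rfl
    rw [h0.2] at h0
    have h1 := h0.1 hi'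
    have := (hg'.iff i i' j i hij hi').1 h1.symm
    omega
  have hC0 : ∀ i j, b j = N → N ≤ b i → (g' * P) i j = 0 := by
    intro i j hj hi
    by_contra hne
    obtain ⟨k, hk, hk2⟩ := hC g' i j hne
    have h0 := ih (b k) (by omega) i k rfl
    rw [h0.2] at h0
    have := h0.1 hk2
    omega
  have hA0 : ∀ i0 i j, b j = N → g i0 j ≠ 0 → b i0 ≤ b i → (P * g) i j = 0 := by
    intro i0 i j hj h0 hle
    by_contra hne
    obtain ⟨k, hk, hk2⟩ := hA g i j hne
    have := (hg.iff i0 k j j h0 hk2).2 rfl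
    omega
  have hsig : ∀ i j, b j = N → g i j ≠ 0 → b i = N := by
    intro i j hj hij
    by_contra hne
    have h1 := hge i j hj hij
    have hpi := hpr i (by omega)
    have e1 := heq (pr i) j
    rw [hB g i j (by omega), hC0 (pr i) j hj (by omega)] at e1
    have h2 : g (pr i) j = 0 := by
      by_contra h3
      have := (hg.iff i (pr i) j j hij h3).2 rfl
      omega
    rw [h2, zero_add, add_zero] at e1
    have h4 : g' (pr i) j ≠ 0 := by rw [← e1]; exact hij
    have h5 : g' i j = 0 := by
      by_contra h3
      have := (hg'.iff i (pr i) j j h3 h4).2 rfl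
      omega
    have e2 := heq i j
    rw [hA0 i i j hj hij le_rfl, hC0 i j hj h1, h5] at e2
    simp at e2
    exact hij e2
  have hsig' : ∀ i j, b j = N → g' i j ≠ 0 → b i = N := by
    intro i j hj hij
    by_contra hne
    have h1 := hge' i j hj hij
    obtain ⟨i0, hi0⟩ := hg.col j
    have h2 := hsig i0 j hj hi0
    have e := heq i j
    rw [hA0 i0 i j hj hi0 (by omega), hC0 i j hj h1] at e
    have h3 : g i j = 0 := by
      by_contra h4; exact hne (hsig i j hj h4)
    rw [h3] at e
    simp at e
    exact hij e.symm
  intro i j hj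
  refine ⟨hsig i j hj, ?_⟩
  by_cases hi : b i = N
  · obtain ⟨i0, hi0⟩ := hg.col j
    have h2 := hsig i0 j hj hi0
    have e := heq i j
    rw [hA0 i0 i j hj hi0 (by omega), hC0 i j hj (by omega)] at e
    simpa using e
  · have h3 : g i j = 0 := by by_contra h4; exact hi (hsig i j hj h4)
    have h4 : g' i j = 0 := by by_contra h4; exact hi (hsig' i j hj h4)
    rw [h3, h4]

lemma trans_aux (b : Fin n → ℕ) (a d : Fin n) (ha : b a = 0) (hd : b d = 1)
    (g g' : Matrix (Fin n) (Fin n) F) (hg : BM b g) (hg' : BM b g')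
    (hdiag : ∀ i j, g i j ≠ 0 → b i = b j)
    (h : Matrix.transvection a d 1 * g = g' * Matrix.transvection a d 1) :
    g a a = g d d ∧ ∀ i, i ≠ a → g i a = 0 := by
  have heq : ∀ i j, g i j + (if i = a then g d j else 0) = g' i j + (if j = d then g' i a else 0) := by
    intro i j
    have := congrFun (congrFun h i) j
    simp only [Matrix.transvection, add_mul, mul_add, one_mul, mul_one, Matrix.add_apply] at this
    convert this using 2
    · by_cases hi : i = a
      · subst hi; simp
      · simp [hi]
    · by_cases hi : j = d
      · subst hi; simp
      · simp [hi]
  have hz : ∀ i j, b i ≠ b j → g i j = 0 := by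
    intro i j hij; by_contra h; exact hij (hdiag i j h)
  have hda : d ≠ a := by rintro rfl; omega
  have hcola : ∀ i, g' i a = g i a := by
    intro i
    have := heq i a
    rw [hz d a (by omega)] at this
    simpa [hda.symm] using this.symm
  have hrow : ∀ i, b i ≠ 0 → g' i d = g i d := by
    intro i hi
    have := heq i d
    have hia : i ≠ a := by rintro rfl; omega
    simp [hia, hcola, hz i a (by omega)] at this
    exact this.symm
  obtain ⟨i0, hi0⟩ := hg.col d
  have hbi0 := hdiag _ _ hi0
  have hi0' : g' i0 d ≠ 0 := by rw [hrow i0 (by omega)]; exact hi0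
  have hz' : ∀ i, b i = 0 → g' i d = 0 := by
    intro i hi
    by_contra hne
    have := (hg'.iff i i0 d d hne hi0').2 rfl
    omega
  constructor
  · have := heq a d
    simp [hz' a ha, hz a d (by omega), hcola] at this
    exact this.symm
  · intro i hi
    by_cases hbi : b i = 0
    · have := heq i d
      simp [hi, hz' i hbi, hz i d (by omega), hcola] at this
      exact this.symm
    · exact hz i a (by omega)

lemma chain_main (b : Fin n → ℕ) (pr : Fin n → Fin n)
    (hpr : ∀ j, 0 < b j → b (pr j) + 1 = b j)
    (hinj : ∀ j k, 0 < b j → 0 < b k → pr j = pr k → j = k)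
    (hsz : ∀ i j k, b i = b j → b j = b k → i = j ∨ j = k ∨ i = k)
    (hpos : ∃ j, 0 < b j) :
    ∃ x y z : Matrix (Fin n) (Fin n) F, x.det = 1 ∧ y.det = 1 ∧ z.det = 1 ∧
      ∀ g g1 g2 g3 : Matrix (Fin n) (Fin n) F, BM b g → BM b g1 → BM b g2 → BM b g3 →
        x * g = g1 * x → y * g = g2 * y → z * g = g3 * z →
        ∃ c : F, g = c • (1 : Matrix (Fin n) (Fin n) F) := by
  classical
  let P : Matrix (Fin n) (Fin n) F := Matrix.of fun i j => if 0 < b j ∧ i = pr j then 1 else 0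
  have hP : ∀ i j, P i j = if 0 < b j ∧ i = pr j then 1 else 0 := fun _ _ => rfl
  have hA : ∀ (g : Matrix (Fin n) (Fin n) F) i j, (P * g) i j ≠ 0 →
      ∃ k, 0 < b k ∧ i = pr k ∧ g k j ≠ 0 := by
    intro g i j hne
    rw [Matrix.mul_apply] at hne
    obtain ⟨k, -, hk⟩ := Finset.exists_ne_zero_of_sum_ne_zero hne
    have h1 := left_ne_zero_of_mul hk
    rw [hP] at h1
    have h2 : 0 < b k ∧ i = pr k := by by_contra h; simp [h] at h1
    exact ⟨k, h2.1, h2.2, right_ne_zero_of_mul hk⟩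
  have hB : ∀ (g : Matrix (Fin n) (Fin n) F) i j, 0 < b i → (P * g) (pr i) j = g i j := by
    intro g i j hi
    rw [Matrix.mul_apply, Finset.sum_eq_single i]
    · simp [hP, hi]
    · intro k _ hk
      rw [hP, if_neg, zero_mul]
      rintro ⟨h1, h2⟩
      exact hk (hinj _ _ h1 hi h2.symm)
    · simp
  have hC0 : ∀ (g : Matrix (Fin n) (Fin n) F) i j, (g * P) i j = if 0 < b j then g i (pr j) else 0 := by
    intro g i j
    rw [Matrix.mul_apply]
    by_cases hj : 0 < b j
    · simp [hP, hj]
    · simp [hP, hj]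
  have hC : ∀ (g : Matrix (Fin n) (Fin n) F) i j, (g * P) i j ≠ 0 → ∃ k, b k + 1 = b j ∧ g i k ≠ 0 := by
    intro g i j hne
    rw [hC0] at hne
    by_cases hj : 0 < b j
    · rw [if_pos hj] at hne; exact ⟨pr j, hpr j hj, hne⟩
    · simp [hj] at hne
  have hxdet : (1 + P).det = 1 := by
    have hbt : (1 + P).BlockTriangular b := by
      intro i j hij
      have h1 : i ≠ j := by rintro rfl; exact lt_irrefl _ hij
      rw [Matrix.add_apply, Matrix.one_apply_ne h1, hP, if_neg, add_zero]
      rintro ⟨h2, rfl⟩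
      have := hpr j h2
      omega
    rw [hbt.det]
    apply Finset.prod_eq_one
    intro k _
    have : (1 + P).toSquareBlock b k = 1 := by
      ext ⟨i, hi⟩ ⟨j, hj⟩
      rw [Matrix.toSquareBlock_def, Matrix.of_apply, Matrix.add_apply, hP, if_neg, add_zero,
        Matrix.one_apply, Matrix.one_apply]
      · simp
      · rintro ⟨h2, rfl⟩
        have := hpr j h2
        simp only at hi hj
        omega
    rw [this, Matrix.det_one]
  -- conclusions from `x`
  have hX : ∀ g g1 : Matrix (Fin n) (Fin n) F, BM b g → BM b g1 → (1 + P) * g = g1 * (1 + P) →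
      (∀ i j, g i j ≠ 0 → b i = b j) ∧ P * g = g * P := by
    intro g g1 hg hg1 h
    have h1 := chain_aux b pr hpr P (fun g i j hne => by
      obtain ⟨k, hk, hk2, hk3⟩ := hA g i j hne
      refine ⟨k, ?_, hk3⟩
      rw [hk2]; exact (hpr k hk).symm) hB hC g g1 hg hg1 h
    have h2 : g = g1 := by
      ext i j; exact (h1 _ i j rfl).2
    refine ⟨fun i j hij => (h1 _ i j rfl).1 hij, ?_⟩
    rw [← h2, add_mul, mul_add, one_mul, mul_one] at h
    exact add_left_cancel h
  have hprop : ∀ g : Matrix (Fin n) (Fin n) F, P * g = g * P → (∀ i j, g i j ≠ 0 → b i = b j) →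
      ∀ c : F, (∀ i j, b i = 0 → b j = 0 → g i j = if i = j then c else 0) →
      g = c • (1 : Matrix (Fin n) (Fin n) F) := by
    intro g hc hd c h0
    have key : ∀ N i j, b i = N → b j = N → g i j = if i = j then c else 0 := by
      intro N
      induction N with
      | zero => exact h0
      | succ N ih =>
        intro i j hi hj
        have h1 := congrFun (congrFun hc (pr i)) j
        rw [hB g i j (by omega), hC0, if_pos (by omega)] at h1
        have e1 := hpr i (by omega)
        have e2 := hpr j (by omega)
        rw [h1, ih _ _ (by omega) (by omega)]
        by_cases hij : i = j
        · simp [hij]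
        · rw [if_neg hij, if_neg]
          intro h; exact hij (hinj i j (by omega) (by omega) h)
    ext i j
    rw [Matrix.smul_apply, Matrix.one_apply, smul_eq_mul, mul_ite, mul_one, mul_zero]
    by_cases hij : b i = b j
    · exact key _ i j rfl hij.symm
    · have h2 : i ≠ j := by rintro rfl; exact hij rfl
      rw [if_neg h2]
      by_contra hne
      exact hij (hd i j hne)
  -- an index in block 1
  obtain ⟨f, hf⟩ : ∃ f, b f = 1 := by
    obtain ⟨j, hj⟩ := hpos
    have : ∀ N, 0 < N → (∃ j, b j = N) → ∃ f, b f = 1 := by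
      intro N
      induction N with
      | zero => intro h; omega
      | succ N ih =>
        intro _ ⟨j, hj⟩
        by_cases hN : N = 0
        · exact ⟨j, by omega⟩
        · have := hpr j (by omega)
          exact ih (by omega) ⟨pr j, by omega⟩
    exact this _ hj ⟨j, rfl⟩
  have hf1 := hpr f (by omega)
  have he1 : b (pr f) = 0 := by omega
  by_cases hone : ∀ i, b i = 0 → i = pr f
  · refine ⟨1 + P, 1, 1, hxdet, by simp, by simp, ?_⟩
    intro g g1 _ _ hg hg1 _ _ hx _ _
    obtain ⟨hd, hc⟩ := hX g g1 hg hg1 hx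
    refine ⟨g (pr f) (pr f), hprop g hc hd _ ?_⟩
    intro i j hi hj
    rw [hone i hi, hone j hj, if_pos rfl]
  push Not at hone
  obtain ⟨e, he, hef⟩ := hone
  have hfe : f ≠ e := by rintro rfl; omega
  have h0 : ∀ i, b i = 0 → i = e ∨ i = pr f := by
    intro i hi
    rcases hsz i e (pr f) (by omega) (by omega) with h | h | h
    · exact Or.inl h
    · exact absurd h hef
    · exact Or.inr h
  have hfin : ∀ g : Matrix (Fin n) (Fin n) F, P * g = g * P → (∀ i j, g i j ≠ 0 → b i = b j) →
      g e e = g f f → g (pr f) e = 0 → g e (pr f) = 0 →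
      ∃ c : F, g = c • (1 : Matrix (Fin n) (Fin n) F) := by
    intro g hc hd h1 h2 h3
    refine ⟨g (pr f) (pr f), hprop g hc hd _ ?_⟩
    have h4 := congrFun (congrFun hc (pr f)) f
    rw [hB g f f (by omega), hC0, if_pos (by omega)] at h4
    intro i j hi hj
    rcases h0 i hi with rfl | rfl <;> rcases h0 j hj with rfl | rfl
    · rw [if_pos rfl, h1, h4]
    · rw [if_neg hef, h3]
    · rw [if_neg (Ne.symm hef), h2]
    · rw [if_pos rfl]
  by_cases hk : ∃ k, b k = 1 ∧ k ≠ f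
  · obtain ⟨k, hk1, hkf⟩ := hk
    have hprk := hpr k (by omega)
    have hk2 : pr k = e := by
      rcases h0 (pr k) (by omega) with h | h
      · exact h
      · exact absurd (hinj _ _ (by omega) (by omega) h) hkf
    refine ⟨1 + P, transvection e f 1, transvection (pr f) k 1, hxdet,
      Matrix.det_transvection_of_ne _ _ hfe.symm _,
      Matrix.det_transvection_of_ne _ _ (by intro h; rw [h] at he1; omega) _, ?_⟩
    intro g g1 g2 g3 hg hg1 hg2 hg3 hx hy hz
    obtain ⟨hd, hc⟩ := hX g g1 hg hg1 hx
    obtain ⟨y1, y2⟩ := trans_aux b e f he hf g g2 hg hg2 hd hy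
    obtain ⟨z1, z2⟩ := trans_aux b (pr f) k he1 hk1 g g3 hg hg3 hd hz
    exact hfin g hc hd y1 (y2 _ hef.symm) (z2 _ hef)
  · refine ⟨1 + P, transvection e f 1, 1, hxdet,
      Matrix.det_transvection_of_ne _ _ hfe.symm _, by simp, ?_⟩
    intro g g1 g2 g3 hg hg1 hg2 hg3 hx hy hz
    obtain ⟨hd, hc⟩ := hX g g1 hg hg1 hx
    obtain ⟨y1, y2⟩ := trans_aux b e f he hf g g2 hg hg2 hd hy
    refine hfin g hc hd y1 (y2 _ hef.symm) ?_
    have h1 := congrFun (congrFun hc e) f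
    rw [hC0, if_pos (by omega)] at h1
    rw [← h1]
    by_contra hne
    obtain ⟨k, hk1, hk2, -⟩ := hA g e f hne
    have hk3 := hpr k hk1
    rw [← hk2] at hk3
    have : k = f := by by_contra h; exact hk ⟨k, by omega, h⟩
    rw [this] at hk2
    exact hef hk2
end



lemma fixed_of_three {T X : Type*} [Group T] [Finite T] [MulAction T X] (h3 : ¬ 3 ∣ Nat.card T)
    (a b c : X) (hab : a ≠ b) (hac : a ≠ c) (hbc : b ≠ c)
    (ha : ∀ t : T, t • a = a ∨ t • a = b ∨ t • a = c)
    (hb : ∀ t : T, t • b = a ∨ t • b = b ∨ t • b = c)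
    (hc : ∀ t : T, t • c = a ∨ t • c = b ∨ t • c = c) :
    (∀ t : T, t • a = a) ∨ (∀ t : T, t • b = b) ∨ (∀ t : T, t • c = c) := by
  have hinv : ∀ (t : T) (u v : X), t • u = v → v ∈ MulAction.orbit T u ∧ u ∈ MulAction.orbit T v := by
    rintro t u v rfl
    exact ⟨⟨t, rfl⟩, ⟨t⁻¹, by simp⟩⟩
  by_cases h1 : b ∈ MulAction.orbit T a
  · by_cases h2 : c ∈ MulAction.orbit T a
    · exfalso
      have ho : MulAction.orbit T a = {a, b, c} := by
        ext x
        simp only [Set.mem_insert_iff, Set.mem_singleton_iff]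
        constructor
        · rintro ⟨t, rfl⟩; exact ha t
        · rintro (rfl | rfl | rfl)
          · exact MulAction.mem_orbit_self _
          · exact h1
          · exact h2
      have hd := orbit_card_dvd (T := T) a
      rw [ho, Nat.card_coe_set_eq, Set.ncard_eq_three.2 ⟨a, b, c, hab, hac, hbc, rfl⟩] at hd
      exact h3 hd
    · right; right
      intro t
      rcases hc t with h | h | h
      · exact absurd (hinv _ _ _ h).2 h2
      · exfalso
        apply h2
        have := (hinv _ _ _ h).2
        rwa [MulAction.orbit_eq_iff.2 h1] at this
      · exact h
  · by_cases h2 : c ∈ MulAction.orbit T a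
    · right; left
      intro t
      rcases hb t with h | h | h
      · exact absurd (hinv _ _ _ h).2 h1
      · exact h
      · exfalso
        apply h1
        have := (hinv _ _ _ h).2
        rwa [MulAction.orbit_eq_iff.2 h2] at this
    · left
      intro t
      rcases ha t with h | h | h
      · exact h
      · exact absurd (hinv _ _ _ h).1 h1
      · exact absurd (hinv _ _ _ h).1 h2

section
variable {F : Type*} [Field F]

lemma comm_traceless (h2 : (2 : F) ≠ 0) (X Y : Matrix (Fin 2) (Fin 2) F) (hX : X.trace = 0)
    (hY : Y.trace = 0) (hX0 : X ≠ 0) (h : X * Y = Y * X) : ∃ β : F, Y = β • X := by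
  rw [Matrix.trace_fin_two] at hX hY
  have h00 := congrFun (congrFun h 0) 0
  have h01 := congrFun (congrFun h 0) 1
  have h10 := congrFun (congrFun h 1) 0
  simp only [Matrix.mul_apply, Fin.sum_univ_two] at h00 h01 h10
  have hX1 : X 1 1 = - X 0 0 := by linear_combination hX
  have hY1 : Y 1 1 = - Y 0 0 := by linear_combination hY
  rw [hX1, hY1] at h01 h10
  have k1 : X 0 0 * Y 0 1 = X 0 1 * Y 0 0 := by
    apply mul_left_cancel₀ h2; linear_combination h01
  have k2 : X 0 0 * Y 1 0 = X 1 0 * Y 0 0 := by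
    apply mul_left_cancel₀ h2; linear_combination - h10
  have k3 : X 0 1 * Y 1 0 = X 1 0 * Y 0 1 := by linear_combination h00
  by_cases ha : X 0 0 = 0
  · by_cases hb : X 0 1 = 0
    · by_cases hc : X 1 0 = 0
      · exfalso; apply hX0
        ext i j; fin_cases i <;> fin_cases j <;> simp [ha, hb, hc, hX1]
      · refine ⟨Y 1 0 / X 1 0, ?_⟩
        ext i j; fin_cases i <;> fin_cases j <;> simp [hX1, hY1] <;> field_simp
        · linear_combination - k2
        · linear_combination - k3
        · linear_combination - k2
    · refine ⟨Y 0 1 / X 0 1, ?_⟩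
      ext i j; fin_cases i <;> fin_cases j <;> simp [hX1, hY1] <;> field_simp
      · linear_combination - k1
      · linear_combination k3
      · linear_combination - k1
  · refine ⟨Y 0 0 / X 0 0, ?_⟩
    ext i j; fin_cases i <;> fin_cases j <;> simp [hX1, hY1] <;> field_simp
    · linear_combination k1
    · linear_combination k2

/-- conjugation representation -/
def conjRep {n : ℕ} (H : Subgroup (GL (Fin n) F)) :
    H →* Module.End F (Matrix (Fin n) (Fin n) F) where
  toFun h := LinearMap.mulLeft F ((h : GL (Fin n) F) : Matrix (Fin n) (Fin n) F) *
    LinearMap.mulRight F (((h : GL (Fin n) F)⁻¹ : GL (Fin n) F) : Matrix (Fin n) (Fin n) F)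
  map_one' := by ext; simp
  map_mul' x y := by
    apply LinearMap.ext
    intro M
    simp [mul_assoc]

lemma conjRep_apply {n : ℕ} (H : Subgroup (GL (Fin n) F)) (h : H) (M : Matrix (Fin n) (Fin n) F) :
    conjRep H h M = ((h : GL (Fin n) F) : Matrix (Fin n) (Fin n) F) * M *
      (((h : GL (Fin n) F)⁻¹ : GL (Fin n) F) : Matrix (Fin n) (Fin n) F) := by
  simp [conjRep, mul_assoc]

lemma conj_eq {n : ℕ} {h : GL (Fin n) F} {M : Matrix (Fin n) (Fin n) F} {μ : F}
    (hh : (h : Matrix (Fin n) (Fin n) F) * M * ((h⁻¹ : GL (Fin n) F) : Matrix (Fin n) (Fin n) F) = μ • M) :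
    (h : Matrix (Fin n) (Fin n) F) * M = μ • (M * (h : Matrix (Fin n) (Fin n) F)) := by
  have := congrArg (· * (h : Matrix (Fin n) (Fin n) F)) hh
  simp only [mul_assoc, Matrix.smul_mul] at this
  rw [← Units.val_mul, inv_mul_cancel, Units.val_one, mul_one] at this
  exact this

lemma trace_conj_gl {n : ℕ} (h : GL (Fin n) F) (M : Matrix (Fin n) (Fin n) F) :
    ((h : Matrix (Fin n) (Fin n) F) * M * ((h⁻¹ : GL (Fin n) F) : Matrix (Fin n) (Fin n) F)).trace =
      M.trace := by
  rw [Matrix.trace_mul_comm, ← mul_assoc, ← Units.val_mul, inv_mul_cancel, Units.val_one, one_mul]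

lemma exists_X0 [Finite F] {H : Subgroup (GL (Fin 2) F)} (h2 : (2 : F) ≠ 0)
    (hp : (Nat.card H : F) ≠ 0) (h3 : ¬ 3 ∣ Nat.card H) (hsolv : Group.IsSolvable H)
    (hE : HasDiag H) :
    ∃ X : Matrix (Fin 2) (Fin 2) F, X.trace = 0 ∧ X.det ≠ 0 ∧ ∀ h ∈ H, ∃ μ : F,
      (h : Matrix (Fin 2) (Fin 2) F) * X = μ • (X * (h : Matrix (Fin 2) (Fin 2) F)) := by
  have : Finite H := inferInstance
  let S : H → Prop := fun h => ∃ c : F, ((h : GL (Fin 2) F) : Matrix (Fin 2) (Fin 2) F) =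
    c • (1 : Matrix (Fin 2) (Fin 2) F)
  obtain ⟨r, hr, hrd⟩ := hE 0
  have hSr : ¬ S ⟨r, hr⟩ := by
    rintro ⟨c, hc⟩
    simp only [hrd] at hc
    have e0 := congrFun (congrFun hc 0) 0
    have e1 := congrFun (congrFun hc 1) 1
    simp at e0 e1
    apply h2
    linear_combination e1 - e0
  obtain ⟨N, hN, ⟨x, hxN, hxS⟩, hcommS⟩ :=
    exists_last_nonscalar S ⟨1, by simp⟩ ⟨r, hr⟩ hSr
  let v : H → Matrix (Fin 2) (Fin 2) F := fun h => ((h : GL (Fin 2) F) : Matrix (Fin 2) (Fin 2) F)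
  have vmul : ∀ a b : H, v (a * b) = v a * v b := by intro a b; simp [v]
  have vinv : ∀ a : H, v a * v a⁻¹ = 1 := by
    intro a; rw [← vmul, mul_inv_cancel]; simp [v]
  have vinv' : ∀ a : H, v a⁻¹ * v a = 1 := by
    intro a; rw [← vmul, inv_mul_cancel]; simp [v]
  have vdet : ∀ a : H, (v a).det ≠ 0 := by
    intro a h
    have := congrArg Matrix.det (vinv a)
    rw [Matrix.det_mul, h, zero_mul, Matrix.det_one] at this
    exact zero_ne_one this
  have hpm : ∀ a ∈ N, ∀ b ∈ N, v a * v b = v b * v a ∨ v a * v b = - (v b * v a) := by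
    intro a ha b hb
    obtain ⟨c, hc⟩ := hcommS a ha b hb
    have hc' : v (a * b * a⁻¹ * b⁻¹) = c • 1 := hc
    have e1 : v a * v b = c • (v b * v a) := by
      have : v (a * b) = v (a * b * a⁻¹ * b⁻¹) * v (b * a) := by
        rw [← vmul]; congr 1; group
      rw [vmul, hc', vmul] at this
      rw [this]; simp
    have e2 : c ^ 2 = 1 := by
      have := congrArg Matrix.det e1
      rw [Matrix.det_smul, Matrix.det_mul, Matrix.det_mul, Fintype.card_fin] at this
      have h0 : (v a).det * (v b).det ≠ 0 := mul_ne_zero (vdet a) (vdet b)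
      apply mul_right_cancel₀ h0
      linear_combination - this
    rcases (sq_eq_one_iff (a := c)).1 e2 with h | h
    · left; rw [e1, h, one_smul]
    · right; rw [e1, h, neg_smul, one_smul]
  have hconjN : ∀ (h a : H), a ∈ N → h * a * h⁻¹ ∈ N := fun h a ha => hN.conj_mem a ha h
  by_cases hab : ∀ a ∈ N, ∀ b ∈ N, v a * v b = v b * v a
  · let τ : F := (v x).trace / 2
    let X : Matrix (Fin 2) (Fin 2) F := v x - τ • 1
    have hvx : v x = τ • 1 + X := by simp [X]
    have hXtr : X.trace = 0 := by
      simp only [X, Matrix.trace_sub, Matrix.trace_smul, Matrix.trace_one, Fintype.card_fin, τ,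
        smul_eq_mul]
      push_cast
      field_simp
      ring
    have hX0 : X ≠ 0 := by
      intro h; apply hxS; exact ⟨τ, by rw [h, add_zero] at hvx; exact hvx⟩
    have hXdet : X.det ≠ 0 := by
      intro hd
      have hXX : X * X = 0 := by
        have hX1 : X 1 1 = - X 0 0 := by
          rw [Matrix.trace_fin_two] at hXtr; linear_combination hXtr
        rw [Matrix.det_fin_two, hX1] at hd
        ext i j
        fin_cases i <;> fin_cases j <;> simp [Matrix.mul_apply, Fin.sum_univ_two, hX1]
        · linear_combination - hd
        · ring
        · ring
        · linear_combination - hd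
      have hτ : τ ≠ 0 := by
        intro h
        rw [h, zero_smul, zero_add] at hvx
        exact vdet x (by rw [hvx]; exact hd)
      have hpow : ∀ k : ℕ, v (x ^ (k + 1)) = τ ^ (k + 1) • 1 + ((k + 1 : ℕ) * τ ^ k) • X := by
        intro k
        induction k with
        | zero => simp [hvx]
        | succ k ih =>
          rw [pow_succ, vmul, ih, hvx]
          simp only [add_mul, mul_add, Matrix.smul_mul, Matrix.mul_smul, one_mul, mul_one, hXX,
            smul_zero, add_zero]
          push_cast
          module
      obtain ⟨m, hm⟩ : ∃ m, Nat.card H = m + 1 := ⟨Nat.card H - 1, by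
        have := Nat.card_pos (α := H); omega⟩
      have h1 := hpow m
      rw [← hm, pow_card_eq_one'] at h1
      have h4 : v 1 = 1 := by simp [v]
      rw [h4] at h1
      have htr := congrArg Matrix.trace h1
      rw [Matrix.trace_add, Matrix.trace_smul, Matrix.trace_smul, hXtr, smul_zero, add_zero,
        Matrix.trace_one, Fintype.card_fin] at htr
      have h5 : τ ^ Nat.card H = 1 := by
        push_cast at htr
        rw [smul_eq_mul] at htr
        apply mul_right_cancel₀ h2
        linear_combination - htr
      rw [h5, one_smul] at h1
      have h6 : ((Nat.card H : F) * τ ^ m) • X = 0 := by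
        exact (left_eq_add.1 h1)
      rcases smul_eq_zero.1 h6 with h | h
      · exact (mul_ne_zero hp (pow_ne_zero _ hτ)) h
      · exact hX0 h
    refine ⟨X, hXtr, hXdet, ?_⟩
    intro h hh
    have hc := hab x hxN _ (hconjN ⟨h, hh⟩ x hxN)
    set h' : H := ⟨h, hh⟩
    rw [vmul, vmul] at hc
    have hY : v h' * X * v h'⁻¹ = v h' * v x * v h'⁻¹ - τ • 1 := by
      simp only [X, mul_sub, sub_mul, Matrix.mul_smul, Matrix.smul_mul, mul_one, vinv]
    obtain ⟨β, hβ⟩ := comm_traceless h2 X (v h' * X * v h'⁻¹) hXtr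
      ((trace_conj_gl h X).trans hXtr) hX0 (by
        rw [hY]
        simp only [X, mul_sub, sub_mul, Matrix.mul_smul, Matrix.smul_mul, mul_one, one_mul, hc]
        abel)
    exact ⟨β, conj_eq hβ⟩
  · push Not at hab
    obtain ⟨a, ha, b, hb, hne⟩ := hab
    have hanti := (hpm a ha b hb).resolve_left hne
    let ρ := conjRep H
    let act : H → Submodule F (Matrix (Fin 2) (Fin 2) F) → Submodule F (Matrix (Fin 2) (Fin 2) F) :=
      fun t U => U.map (ρ t)
    have hne0 : ∀ a : H, v a ≠ 0 := by
      intro a h; apply vdet a; rw [h]; simp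
    have hnn : ∀ M : Matrix (Fin 2) (Fin 2) F, M = - M → M = 0 := by
      intro M hM
      have : (2 : F) • M = 0 := by rw [two_smul]; nth_rewrite 1 [hM]; simp
      exact (smul_eq_zero.1 this).resolve_left h2
    have htr0 : ∀ a b : H, v a * v b = - (v b * v a) → (v a).trace = 0 := by
      intro a b h
      have h1 : v b * v a * v b⁻¹ = - v a := by
        have : v b * v a = - (v a * v b) := by rw [h]; simp
        rw [this, neg_mul, mul_assoc, vinv, mul_one]
      have h4 : (v b * v a * v b⁻¹).trace = (v a).trace := trace_conj_gl (b : GL (Fin 2) F) (v a)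
      rw [h1, Matrix.trace_neg] at h4
      apply mul_left_cancel₀ h2
      linear_combination - h4
    have hanti2 : v b * v a = - (v a * v b) := by rw [hanti]; simp
    have hta := htr0 a b hanti
    have htb := htr0 b a hanti2
    have hac : v a * v (a * b) = - (v (a * b) * v a) := by
      rw [vmul, mul_assoc (v a) (v b), hanti2]; simp
    have hbc : v b * v (a * b) = - (v (a * b) * v b) := by
      rw [vmul, ← mul_assoc (v b), hanti2]; simp [mul_assoc]
    have htc := htr0 (a * b) a (by rw [hac]; simp)
    have hcN : a * b ∈ N := N.mul_mem ha hb
    let L : H → Submodule F (Matrix (Fin 2) (Fin 2) F) := fun z => Submodule.span F {v z}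
    have hLne : ∀ y z : H, v y * v z = - (v z * v y) → L y ≠ L z := by
      intro y z hyz h
      have : v z ∈ L y := by rw [h]; exact Submodule.mem_span_singleton_self _
      obtain ⟨μ, hμ⟩ := Submodule.mem_span_singleton.1 this
      have h1 : v y * v z = v z * v y := by rw [← hμ]; simp
      have h4 := hnn (v (y * z)) (by rw [vmul]; nth_rewrite 1 [hyz]; rw [h1])
      exact hne0 _ h4
    have hsmul : ∀ (t z : H), act t (L z) = L (t * z * t⁻¹) := by
      intro t z
      change (L z).map (ρ t) = _
      simp only [L, Submodule.map_span, Set.image_singleton]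
      congr 2
      rw [vmul, vmul]
      exact conjRep_apply H t (v z)
    have hline : ∀ z ∈ N, (v z).trace = 0 → L z = L a ∨ L z = L b ∨ L z = L (a * b) := by
      intro z hz htz
      have hL : ∀ y : H, (∃ β : F, v z = β • v y) → L z = L y := by
        rintro y ⟨β, hβ⟩
        have hb0 : β ≠ 0 := by rintro rfl; exact hne0 z (by rw [hβ, zero_smul])
        simp only [L, hβ]
        exact Submodule.span_singleton_smul_eq (IsUnit.mk0 β hb0) _
      rcases hpm a ha z hz with h1 | h1
      · left; exact hL a (comm_traceless h2 _ _ hta htz (hne0 a) h1)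
      rcases hpm b hb z hz with h4 | h4
      · right; left; exact hL b (comm_traceless h2 _ _ htb htz (hne0 b) h4)
      right; right
      refine hL _ (comm_traceless h2 _ _ htc htz (hne0 _) ?_)
      rw [vmul, mul_assoc, h4, mul_neg, ← mul_assoc, h1]
      simp [mul_assoc]
    have hperm : ∀ (z : H), z ∈ N → (v z).trace = 0 → ∀ t : H,
        act t (L z) = L a ∨ act t (L z) = L b ∨ act t (L z) = L (a * b) := by
      intro z hz htz t
      rw [hsmul]
      refine hline _ (hconjN t z hz) ?_
      rw [vmul, vmul]
      exact (trace_conj_gl (t : GL (Fin 2) F) (v z)).trans htz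
    have hfin : ∀ z : H, (v z).trace = 0 → (∀ t : H, act t (L z) = L z) →
        ∃ X : Matrix (Fin 2) (Fin 2) F, X.trace = 0 ∧ X.det ≠ 0 ∧ ∀ h ∈ H, ∃ μ : F,
          (h : Matrix (Fin 2) (Fin 2) F) * X = μ • (X * (h : Matrix (Fin 2) (Fin 2) F)) := by
      intro z htz hz
      refine ⟨v z, htz, vdet z, fun h hh => ?_⟩
      have h1 := hz ⟨h, hh⟩
      rw [hsmul] at h1
      have h4 : v (⟨h, hh⟩ * z * ⟨h, hh⟩⁻¹) ∈ L z := by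
        rw [← h1]; exact Submodule.mem_span_singleton_self _
      obtain ⟨μ, hμ⟩ := Submodule.mem_span_singleton.1 h4
      rw [vmul, vmul] at hμ
      exact ⟨μ, conj_eq hμ.symm⟩
    rcases @fixed_of_three _ _ _ _ (subAct ρ) h3 (L a) (L b) (L (a * b)) (hLne _ _ hanti) (hLne _ _ hac) (hLne _ _ hbc)
      (hperm a ha hta) (hperm b hb htb) (hperm _ hcN htc) with h | h | h
    · exact hfin a hta h
    · exact hfin b htb h
    · exact hfin _ htc h
end


section P7
open scoped commutatorElement

/-- quaternion-group condition on entries -/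
def qcond (a b c d : ZMod 3) : Prop := a * d - b * c = 1 ∧ (a + d = 0 ∨ (b = 0 ∧ c = 0 ∧ a = d))

instance (a b c d : ZMod 3) : Decidable (qcond a b c d) := by unfold qcond; infer_instance

/-- scalar condition on entries -/
def scond (a b c d : ZMod 3) : Prop := b = 0 ∧ c = 0 ∧ a = d

instance (a b c d : ZMod 3) : Decidable (scond a b c d) := by unfold scond; infer_instance

/-- commutator entries: `g h (h g)⁻¹` with `(h g)⁻¹` the adjugate -/
def ent (a b c d e f g h : ZMod 3) (P : ZMod 3 → ZMod 3 → ZMod 3 → ZMod 3 → Prop) : Prop :=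
  P ((a * e + b * g) * (g * b + h * d) - (a * f + b * h) * (g * a + h * c))
    (-((a * e + b * g) * (e * b + f * d)) + (a * f + b * h) * (e * a + f * c))
    ((c * e + d * g) * (g * b + h * d) - (c * f + d * h) * (g * a + h * c))
    (-((c * e + d * g) * (e * b + f * d)) + (c * f + d * h) * (e * a + f * c))

instance (a b c d e f g h : ZMod 3) (P : ZMod 3 → ZMod 3 → ZMod 3 → ZMod 3 → Prop)
    [∀ a b c d, Decidable (P a b c d)] : Decidable (ent a b c d e f g h P) := by
  unfold ent; infer_instance

set_option maxRecDepth 100000 in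
set_option maxHeartbeats 4000000 in
lemma dec1 : ∀ a b c d : ZMod 3, a * d - b * c = 1 → ∀ e f g h : ZMod 3, e * h - f * g = 1 →
    ent a b c d e f g h qcond := by
  decide

set_option maxRecDepth 100000 in
set_option maxHeartbeats 4000000 in
lemma dec2 : ∀ a b c d : ZMod 3, qcond a b c d → ∀ e f g h : ZMod 3, qcond e f g h →
    ent a b c d e f g h scond := by
  decide

set_option maxRecDepth 100000 in
set_option maxHeartbeats 4000000 in
lemma dec3 : ∀ a b c d : ZMod 3, qcond a b c d → ∀ e f g h : ZMod 3, qcond e f g h →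
    qcond (a * e + b * g) (a * f + b * h) (c * e + d * g) (c * f + d * h) := by
  decide

/-- entries of a matrix satisfy a predicate -/
def entOf (P : ZMod 3 → ZMod 3 → ZMod 3 → ZMod 3 → Prop) (M : Matrix (Fin 2) (Fin 2) (ZMod 3)) :
    Prop := P (M 0 0) (M 0 1) (M 1 0) (M 1 1)

lemma ent_comm (P : ZMod 3 → ZMod 3 → ZMod 3 → ZMod 3 → Prop) (x y : GL (Fin 2) (ZMod 3))
    (hx : (x : Matrix (Fin 2) (Fin 2) (ZMod 3)).det = 1)
    (hy : (y : Matrix (Fin 2) (Fin 2) (ZMod 3)).det = 1) :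
    ent ((x : Matrix (Fin 2) (Fin 2) (ZMod 3)) 0 0) ((x : Matrix (Fin 2) (Fin 2) (ZMod 3)) 0 1)
      ((x : Matrix (Fin 2) (Fin 2) (ZMod 3)) 1 0) ((x : Matrix (Fin 2) (Fin 2) (ZMod 3)) 1 1)
      ((y : Matrix (Fin 2) (Fin 2) (ZMod 3)) 0 0) ((y : Matrix (Fin 2) (Fin 2) (ZMod 3)) 0 1)
      ((y : Matrix (Fin 2) (Fin 2) (ZMod 3)) 1 0) ((y : Matrix (Fin 2) (Fin 2) (ZMod 3)) 1 1) P →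
    entOf P ((⁅x, y⁆ : GL (Fin 2) (ZMod 3)) : Matrix (Fin 2) (Fin 2) (ZMod 3)) := by
  intro h
  have e : ⁅x, y⁆ = x * y * (y * x)⁻¹ := by rw [commutatorElement_def]; group
  have hd : ((y * x : GL (Fin 2) (ZMod 3)) : Matrix (Fin 2) (Fin 2) (ZMod 3)).det = 1 := by
    rw [Units.val_mul, Matrix.det_mul, hx, hy, one_mul]
  have hinv : (((y * x)⁻¹ : GL (Fin 2) (ZMod 3)) : Matrix (Fin 2) (Fin 2) (ZMod 3)) =
      ((y * x : GL (Fin 2) (ZMod 3)) : Matrix (Fin 2) (Fin 2) (ZMod 3)).adjugate := by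
    rw [Matrix.coe_units_inv, Matrix.inv_def, hd, Ring.inverse_one, one_smul]
  unfold ent at h
  unfold entOf
  rw [e, Units.val_mul, hinv, Matrix.adjugate_fin_two]
  convert h using 1 <;> simp [Matrix.mul_apply, Fin.sum_univ_two] <;> ring

/-- the quaternion subgroup -/
def q8 : Subgroup (GL (Fin 2) (ZMod 3)) where
  carrier := {x | entOf qcond (x : Matrix (Fin 2) (Fin 2) (ZMod 3))}
  one_mem' := by
    simp only [Set.mem_ofPred_eq, entOf, Units.val_one]
    simp [qcond]
  mul_mem' := by
    intro x y hx hy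
    simp only [Set.mem_ofPred_eq, entOf] at *
    simpa [Matrix.mul_apply, Fin.sum_univ_two] using dec3 _ _ _ _ hx _ _ _ _ hy
  inv_mem' := by
    intro x hx
    simp only [Set.mem_ofPred_eq, entOf] at *
    have hd : (x : Matrix (Fin 2) (Fin 2) (ZMod 3)).det = 1 := by
      rw [Matrix.det_fin_two]; exact hx.1
    rw [Matrix.coe_units_inv, Matrix.inv_def, hd, Ring.inverse_one, one_smul,
      Matrix.adjugate_fin_two]
    obtain ⟨h1, h2⟩ := hx
    refine ⟨?_, ?_⟩
    · simp; linear_combination h1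
    · rcases h2 with h | ⟨h, h', h''⟩
      · left; simp; linear_combination h
      · right; simp [h, h', h'']

lemma gl23_solvable : Group.IsSolvable (GL (Fin 2) (ZMod 3)) := by
  refine ⟨⟨4, ?_⟩⟩
  have d1 : derivedSeries (GL (Fin 2) (ZMod 3)) 1 ≤
      (Matrix.GeneralLinearGroup.det : GL (Fin 2) (ZMod 3) →* (ZMod 3)ˣ).ker := by
    rw [derivedSeries_succ, Subgroup.commutator_le]
    intro x _ y _
    rw [MonoidHom.mem_ker, map_commutatorElement, commutatorElement_eq_one_iff_mul_comm, mul_comm]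
  have hdet : ∀ x ∈ (Matrix.GeneralLinearGroup.det : GL (Fin 2) (ZMod 3) →* (ZMod 3)ˣ).ker,
      (x : Matrix (Fin 2) (Fin 2) (ZMod 3)).det = 1 := by
    intro x hx
    have := congrArg Units.val (MonoidHom.mem_ker.1 hx)
    simpa using this
  have d2 : derivedSeries (GL (Fin 2) (ZMod 3)) 2 ≤ q8 := by
    rw [derivedSeries_succ]
    refine (Subgroup.commutator_mono d1 d1).trans ?_
    rw [Subgroup.commutator_le]
    intro x hx y hy
    have ex := hdet x hx
    have ey := hdet y hy
    refine ent_comm qcond x y ex ey (dec1 _ _ _ _ ?_ _ _ _ _ ?_)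
    · rw [Matrix.det_fin_two] at ex; exact ex
    · rw [Matrix.det_fin_two] at ey; exact ey
  have d3 : derivedSeries (GL (Fin 2) (ZMod 3)) 3 ≤ Subgroup.center _ := by
    rw [derivedSeries_succ]
    refine (Subgroup.commutator_mono d2 d2).trans ?_
    rw [Subgroup.commutator_le]
    intro x hx y hy
    have ex : (x : Matrix (Fin 2) (Fin 2) (ZMod 3)).det = 1 := by
      rw [Matrix.det_fin_two]; exact hx.1
    have ey : (y : Matrix (Fin 2) (Fin 2) (ZMod 3)).det = 1 := by
      rw [Matrix.det_fin_two]; exact hy.1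
    obtain ⟨h1, h2, h3⟩ := ent_comm scond x y ex ey (dec2 _ _ _ _ hx _ _ _ _ hy)
    rw [Subgroup.mem_center_iff]
    intro z
    apply Units.ext
    rw [Units.val_mul, Units.val_mul]
    generalize ((⁅x, y⁆ : GL (Fin 2) (ZMod 3)) : Matrix (Fin 2) (Fin 2) (ZMod 3)) = M at *
    have : M = M 1 1 • (1 : Matrix (Fin 2) (Fin 2) (ZMod 3)) := by
      ext i j; fin_cases i <;> fin_cases j <;> simp [h1, h2, h3]
    rw [this]; simp
  rw [derivedSeries_succ, eq_bot_iff]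
  refine (Subgroup.commutator_mono d3 d3).trans ?_
  rw [Subgroup.commutator_le]
  intro x hx y hy
  rw [Subgroup.mem_bot, commutatorElement_eq_one_iff_mul_comm]
  exact Subgroup.mem_center_iff.1 hy x

lemma gl2_solvable {F : Type*} [Field F] [Fintype F] (h : Fintype.card F = 3) :
    Group.IsSolvable (GL (Fin 2) F) := by
  let e := ZMod.ringEquivOfPrime F Nat.prime_three h
  have := gl23_solvable
  refine Group.isSolvable_of_isSolvable_injective
    (f := Matrix.GeneralLinearGroup.map (n := Fin 2) (e.symm : F →+* ZMod 3)) ?_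
  intro x y hxy
  apply Units.ext
  ext i j
  have h1 := congrArg (fun z : GL (Fin 2) (ZMod 3) => (z : Matrix (Fin 2) (Fin 2) (ZMod 3)) i j) hxy
  simpa using h1

section
variable {F : Type*} [Field F]

lemma mu_sq {g A : Matrix (Fin 2) (Fin 2) F} {μ : F} (hg : g.det ≠ 0) (hA : A.det ≠ 0)
    (h : g * A = μ • (A * g)) : μ = 1 ∨ μ = -1 := by
  have := congrArg Matrix.det h
  rw [Matrix.det_smul, Matrix.det_mul, Matrix.det_mul, Fintype.card_fin] at this
  apply (sq_eq_one_iff (a := μ)).1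
  apply mul_right_cancel₀ (mul_ne_zero hg hA)
  linear_combination - this

lemma mu_eq {g : GL (Fin 2) F} {A B : Matrix (Fin 2) (Fin 2) F} {μ ν : F}
    (hA : A.det ≠ 0) (hB : B.det ≠ 0) (ht : (A * B).trace ≠ 0)
    (h : (g : Matrix (Fin 2) (Fin 2) F) * A = μ • (A * (g : Matrix (Fin 2) (Fin 2) F)))
    (h' : (g : Matrix (Fin 2) (Fin 2) F) * B = ν • (B * (g : Matrix (Fin 2) (Fin 2) F))) : μ = ν := by
  have hg : (g : Matrix (Fin 2) (Fin 2) F).det ≠ 0 := by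
    have := (Matrix.isUnit_iff_isUnit_det _).1 g.isUnit
    exact this.ne_zero
  have h1 : (g : Matrix (Fin 2) (Fin 2) F) * (A * B) *
      ((g⁻¹ : GL (Fin 2) F) : Matrix (Fin 2) (Fin 2) F) = (μ * ν) • (A * B) := by
    rw [← mul_assoc, h, Matrix.smul_mul, mul_assoc A, h', Matrix.mul_smul, smul_smul,
      Matrix.smul_mul, mul_assoc, mul_assoc B, ← Units.val_mul, mul_inv_cancel, Units.val_one, mul_one]
  have h2 := congrArg Matrix.trace h1
  rw [trace_conj_gl, Matrix.trace_smul, smul_eq_mul] at h2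
  have h3 : μ * ν = 1 := by
    apply mul_right_cancel₀ ht; linear_combination - h2
  rcases mu_sq hg hB h' with h | h
  · rw [h, mul_one] at h3; rw [h, h3]
  · rw [h] at h3 ⊢; linear_combination - h3

lemma exists_s [Fintype F] (hF : 3 < Fintype.card F) (t : F) : ∃ s : F, s ≠ 0 ∧ s ^ 2 ≠ t := by
  by_contra hcon
  push Not at hcon
  have hP : (Polynomial.X ^ 3 - Polynomial.C t * Polynomial.X : Polynomial F) = 0 := by
    apply Polynomial.eq_zero_of_natDegree_lt_card_of_eval_eq_zero' _ Finset.univ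
    · intro s _
      by_cases hs : s = 0
      · simp [hs]
      · simp [← hcon s hs]; ring
    · rw [Finset.card_univ]
      refine lt_of_le_of_lt ?_ hF
      compute_degree
  have := congrArg (fun p => Polynomial.coeff p 3) hP
  simp [Polynomial.coeff_X] at this

/-- the core statement -/
def Core {n : ℕ} (H : Subgroup (GL (Fin n) F)) : Prop :=
  ∃ x y z : Matrix (Fin n) (Fin n) F, x.det = 1 ∧ y.det = 1 ∧ z.det = 1 ∧
      ∀ g ∈ H, ∀ g1 ∈ H, ∀ g2 ∈ H, ∀ g3 ∈ H,
        x * (g : Matrix (Fin n) (Fin n) F) = (g1 : Matrix (Fin n) (Fin n) F) * x →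
        y * (g : Matrix (Fin n) (Fin n) F) = (g2 : Matrix (Fin n) (Fin n) F) * y →
        z * (g : Matrix (Fin n) (Fin n) F) = (g3 : Matrix (Fin n) (Fin n) F) * z →
        ∃ c : F, (g : Matrix (Fin n) (Fin n) F) = c • (1 : Matrix (Fin n) (Fin n) F)

lemma two_case [Fintype F] {H : Subgroup (GL (Fin 2) F)} (h2 : (2 : F) ≠ 0)
    (hp : (Nat.card H : F) ≠ 0) (h3 : ¬ 3 ∣ Nat.card H) (hsolv : Group.IsSolvable H)
    (hE : HasDiag H) (hblk : blk H 0 1) (hF : 3 < Fintype.card F) : Core H := by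
  obtain ⟨X, hXt, hXd, hX⟩ := exists_X0 h2 hp h3 hsolv hE
  obtain ⟨r, hr, hrd⟩ := hE 0
  rw [Matrix.trace_fin_two] at hXt
  have hX1 : X 1 1 = - X 0 0 := by linear_combination hXt
  have ha : X 0 0 = 0 := by
    by_contra ha
    obtain ⟨μ, hμ⟩ := hX r hr
    rw [hrd] at hμ
    have e00 := congrFun (congrFun hμ 0) 0
    have e01 := congrFun (congrFun hμ 0) 1
    have e10 := congrFun (congrFun hμ 1) 0
    simp [Matrix.mul_apply, Fin.sum_univ_two, Matrix.diagonal_apply] at e00 e01 e10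
    have hμ1 : μ = 1 := by
      apply mul_right_cancel₀ ha; linear_combination - e00
    have hb : X 0 1 = 0 := by
      apply mul_left_cancel₀ h2; rw [hμ1] at e01; linear_combination - e01
    have hc : X 1 0 = 0 := by
      apply mul_left_cancel₀ h2; rw [hμ1] at e10; linear_combination e10
    obtain ⟨g, hg, j, h0, h1⟩ := hblk
    obtain ⟨ν, hν⟩ := hX g hg
    have f0 := congrFun (congrFun hν 0) j
    have f1 := congrFun (congrFun hν 1) j
    have hone : (1 : F) = ν ∧ (1 : F) = - ν ∨ (1 : F) = -ν ∧ (1 : F) = ν := by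
      fin_cases j
      · left
        simp [Matrix.mul_apply, Fin.sum_univ_two, hb, hc, hX1] at f0 f1 h0 h1
        constructor
        · apply mul_right_cancel₀ (mul_ne_zero h0 ha); linear_combination f0
        · apply mul_right_cancel₀ (mul_ne_zero h1 ha); linear_combination f1
      · right
        simp [Matrix.mul_apply, Fin.sum_univ_two, hb, hc, hX1] at f0 f1 h0 h1
        constructor
        · apply mul_right_cancel₀ (mul_ne_zero h0 ha); linear_combination - f0
        · apply mul_right_cancel₀ (mul_ne_zero h1 ha); linear_combination f1
    apply h2
    rcases hone with ⟨u, w⟩ | ⟨u, w⟩ <;> linear_combination u + w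
  set b := X 0 1 with hb
  set c := X 1 0 with hc
  have hXe : X = !![0, b; c, 0] := by
    ext i j; fin_cases i <;> fin_cases j <;> simp [ha, hX1, hb, hc]
  rw [Matrix.det_fin_two, ha, ← hb, ← hc, zero_mul, zero_sub] at hXd
  have hb0 : b ≠ 0 := by intro h; apply hXd; rw [h]; ring
  have hc0 : c ≠ 0 := by intro h; apply hXd; rw [h]; ring
  obtain ⟨s, hs, hst⟩ := exists_s hF (2 * b / c)
  let A : F → Matrix (Fin 2) (Fin 2) F := fun t => !![- t * c, b - t ^ 2 * c; c, t * c]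
  have hAd : ∀ t, (A t).det ≠ 0 := by
    intro t
    rw [show (A t).det = - (b * c) by simp [A, Matrix.det_fin_two]; ring]
    exact hXd
  have hstep : ∀ t : F, ∀ g ∈ H, ∀ g1 ∈ H,
      !![1, t; 0, 1] * (g : Matrix (Fin 2) (Fin 2) F) = (g1 : Matrix (Fin 2) (Fin 2) F) * !![1, t; 0, 1] →
      ∃ μ : F, (g : Matrix (Fin 2) (Fin 2) F) * A t = μ • (A t * (g : Matrix (Fin 2) (Fin 2) F)) := by
    intro t g _ g1 hg1 h
    obtain ⟨μ, hμ⟩ := hX g1 hg1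
    refine ⟨μ, ?_⟩
    have hA : A t = !![1, -t; 0, 1] * X * !![1, t; 0, 1] := by
      rw [hXe]; ext i j; fin_cases i <;> fin_cases j <;> simp [A] <;> ring
    have hu : (!![1, -t; 0, 1] : Matrix (Fin 2) (Fin 2) F) * !![1, t; 0, 1] = 1 := by
      ext i j; fin_cases i <;> fin_cases j <;> simp
    have hu' : (!![1, t; 0, 1] : Matrix (Fin 2) (Fin 2) F) * !![1, -t; 0, 1] = 1 := by
      ext i j; fin_cases i <;> fin_cases j <;> simp
    rw [hA]
    generalize (!![1, t; 0, 1] : Matrix (Fin 2) (Fin 2) F) = u at *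
    generalize (!![1, -t; 0, 1] : Matrix (Fin 2) (Fin 2) F) = w at *
    have hgw : (g : Matrix (Fin 2) (Fin 2) F) = w * (g1 : Matrix (Fin 2) (Fin 2) F) * u := by
      rw [mul_assoc, ← h, ← mul_assoc, hu, one_mul]
    calc (g : Matrix (Fin 2) (Fin 2) F) * (w * X * u)
        = w * (g1 : Matrix (Fin 2) (Fin 2) F) * (u * w) * X * u := by rw [hgw]; noncomm_ring
      _ = w * ((g1 : Matrix (Fin 2) (Fin 2) F) * X) * u := by rw [hu']; noncomm_ring
      _ = μ • (w * X * (u * w) * (g1 : Matrix (Fin 2) (Fin 2) F) * u) := by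
        rw [hμ, hu']; simp [mul_assoc]
      _ = μ • (w * X * u * (g : Matrix (Fin 2) (Fin 2) F)) := by rw [hgw]; congr 1; noncomm_ring
  have htr : ∀ t : F, t ^ 2 ≠ 2 * b / c → (A 0 * A t).trace ≠ 0 := by
    intro t ht h0
    apply ht
    simp [A, Matrix.trace_fin_two, Matrix.mul_apply, Fin.sum_univ_two] at h0
    rw [eq_div_iff hc0]
    apply mul_left_cancel₀ hc0
    linear_combination - h0
  refine ⟨!![1, s; 0, 1], !![1, -s; 0, 1], 1, by simp, by simp, by simp, ?_⟩
  intro g hg g1 hg1 g2 hg2 g3 hg3 e1 e2 _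
  obtain ⟨μ0, h0⟩ := hstep 0 g hg g hg (by
    rw [show (!![1, 0; 0, 1] : Matrix (Fin 2) (Fin 2) F) = 1 by
      ext i j; fin_cases i <;> fin_cases j <;> simp]; simp)
  obtain ⟨μ1, h1⟩ := hstep s g hg g1 hg1 e1
  obtain ⟨μ2, h4⟩ := hstep (-s) g hg g2 hg2 e2
  have m1 := mu_eq (hAd 0) (hAd s) (htr s hst) h0 h1
  have m2 := mu_eq (hAd 0) (hAd (-s)) (htr (-s) (by rw [neg_sq]; exact hst)) h0 h4
  have hgd : (g : Matrix (Fin 2) (Fin 2) F).det ≠ 0 :=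
    ((Matrix.isUnit_iff_isUnit_det _).1 g.isUnit).ne_zero
  have hm := mu_sq hgd (hAd 0) h0
  rw [← m1] at h1
  rw [← m2] at h4
  rw [Matrix.det_fin_two] at hgd
  generalize (g : Matrix (Fin 2) (Fin 2) F) = M at *
  have a00 := congrFun (congrFun h0 0) 0
  have a01 := congrFun (congrFun h0 0) 1
  have b10 := congrFun (congrFun h1 1) 0
  have b00 := congrFun (congrFun h1 0) 0
  have b11 := congrFun (congrFun h1 1) 1
  have c00 := congrFun (congrFun h4 0) 0
  have c11 := congrFun (congrFun h4 1) 1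
  simp only [Matrix.smul_apply, Matrix.mul_apply, Fin.sum_univ_two] at a00 a01 b00 b10 b11 c00 c11
  simp [A] at a00 a01 b00 b10 b11 c00 c11
  rcases hm with rfl | rfl
  · have k1 : M 0 0 = M 1 1 := by apply mul_right_cancel₀ hb0; linear_combination a01
    have k2 : M 1 0 = 0 := by
      apply mul_left_cancel₀ (mul_ne_zero h2 (mul_ne_zero hs hc0)); linear_combination - c * k1 - b10
    have k3 : M 0 1 = 0 := by
      apply mul_right_cancel₀ hc0; linear_combination a00 + b * k2
    refine ⟨M 1 1, ?_⟩
    ext i j; fin_cases i <;> fin_cases j <;> simp [k1, k2, k3]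
  · exfalso
    have hsc := mul_ne_zero hs hc0
    have k1 : M 0 0 = 0 := by
      apply mul_left_cancel₀ (mul_ne_zero h2 (mul_ne_zero h2 hsc)); linear_combination c00 - b00
    have k4 : M 1 1 = 0 := by
      apply mul_left_cancel₀ (mul_ne_zero h2 (mul_ne_zero h2 hsc)); linear_combination b11 - c11
    have k2 : M 1 0 = 0 := by
      apply mul_left_cancel₀ (mul_ne_zero h2 (mul_ne_zero hs hsc))
      linear_combination 2 * a00 - b00 - c00
    apply hgd
    rw [k1, k2]; ring
end

end P7


section Final
variable {F : Type*} [Field F] {n : ℕ}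

lemma core_of_diag [Fintype F] {H : Subgroup (GL (Fin n) F)} (h2 : (2 : F) ≠ 0)
    (hp : (Nat.card H : F) ≠ 0) (h3 : ¬ 3 ∣ Nat.card H) (hsolv : Group.IsSolvable H)
    (hE : HasDiag H) (hn : 2 ≤ n) (hF : n = 2 → 3 < Fintype.card F) : Core H := by
  let s : Setoid (Fin n) := ⟨blk H, fun i => blk_refl i, fun h => blk_symm h,
    fun h h' => blk_trans h2 hp h3 hsolv hE h h'⟩
  obtain ⟨b, pr, hb, hpr, hinj⟩ := exists_block_order s
  have hb' : ∀ i j, blk H i j ↔ b i = b j := hb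
  have hBM : ∀ g ∈ H, BM b (g : Matrix (Fin n) (Fin n) F) := by
    intro g hg
    refine ⟨fun i i' j j' h h' => ?_, fun j => ?_⟩
    · rw [← hb', ← hb']
      exact blk_iff h2 hp h3 hsolv hE g hg i i' j j' h h'
    · by_contra hcon
      push Not at hcon
      have h1 : ((g⁻¹ : GL (Fin n) F) : Matrix (Fin n) (Fin n) F) *
        (g : Matrix (Fin n) (Fin n) F) = 1 := g.inv_mul
      have h2 := congrFun (congrFun h1 j) j
      rw [Matrix.mul_apply] at h2
      simp [hcon] at h2
  by_cases hpos : ∃ j, 0 < b j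
  · have hsz : ∀ i j k, b i = b j → b j = b k → i = j ∨ j = k ∨ i = k := by
      intro i j k hij hjk
      by_contra hcon
      push Not at hcon
      exact blk_three h2 hp h3 hsolv hE ((hb' i j).2 hij) ((hb' j k).2 hjk) hcon.1 hcon.2.2 hcon.2.1
    obtain ⟨x, y, z, hx, hy, hz, hmain⟩ := chain_main (F := F) b pr hpr hinj hsz hpos
    exact ⟨x, y, z, hx, hy, hz, fun g hg g1 hg1 g2 hg2 g3 hg3 => 
      hmain _ _ _ _ (hBM g hg) (hBM g1 hg1) (hBM g2 hg2) (hBM g3 hg3)⟩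
  · push Not at hpos
    have hall : ∀ i j, blk H i j := fun i j => by
      rw [hb']; have := hpos i; have := hpos j; omega
    by_cases hn2 : n = 2
    · subst hn2
      exact two_case h2 hp h3 hsolv hE (hall 0 1) (hF rfl)
    · exfalso
      refine blk_three h2 hp h3 hsolv hE (hall (⟨0, by omega⟩ : Fin n) ⟨1, by omega⟩)
        (hall _ ⟨2, by omega⟩) ?_ ?_ ?_ <;> simp

/-- diagonal sign matrices -/
def diagSignHom (n : ℕ) (F : Type*) [Field F] : (Fin n → ℤˣ) →* GL (Fin n) F :=
  MonoidHom.toHomUnits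
    { toFun := fun e => Matrix.diagonal (fun k => (((e k : ℤ)) : F))
      map_one' := by simp
      map_mul' := by
        intro a b
        rw [Matrix.diagonal_mul_diagonal]
        simp }

lemma exists_conj_signs {H : Subgroup (GL (Fin n) F)} (h : ¬ 2 ∣ H.index) :
    ∃ g0 : GL (Fin n) F, ∀ e, g0⁻¹ * diagSignHom n F e * g0 ∈ H := by
  letI : MulAction (Fin n → ℤˣ) (GL (Fin n) F ⧸ H) := MulAction.compHom _ (diagSignHom n F)
  have hpg : IsPGroup 2 (Fin n → ℤˣ) := by
    intro e
    refine ⟨1, ?_⟩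
    ext k
    simp
  haveI : Fact (Nat.Prime 2) := ⟨Nat.prime_two⟩
  obtain ⟨a, ha⟩ := hpg.nonempty_fixed_point_of_prime_not_dvd_card (GL (Fin n) F ⧸ H) h
  induction a using QuotientGroup.induction_on with
  | H g0 =>
    refine ⟨g0, fun e => ?_⟩
    have := ha e
    have h' : ((diagSignHom n F e * g0 : GL (Fin n) F) : GL (Fin n) F ⧸ H) = (g0 : GL (Fin n) F ⧸ H) := this
    have := QuotientGroup.eq.1 h'.symm
    rwa [← mul_assoc] at this

lemma final_core [Fintype F] {H : Subgroup (GL (Fin n) F)} (h2 : (2 : F) ≠ 0)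
    (hp : (Nat.card H : F) ≠ 0) (h3 : ¬ 3 ∣ Nat.card H) (hsolv : Group.IsSolvable H)
    (hi : ¬ 2 ∣ H.index) (hn : 2 ≤ n) (hF : n = 2 → 3 < Fintype.card F) :
    ∃ x y z : GL (Fin n) F, (x : Matrix (Fin n) (Fin n) F).det = 1 ∧
      (y : Matrix (Fin n) (Fin n) F).det = 1 ∧ (z : Matrix (Fin n) (Fin n) F).det = 1 ∧
      ∀ g ∈ H, x * g * x⁻¹ ∈ H → y * g * y⁻¹ ∈ H → z * g * z⁻¹ ∈ H →
        ∃ c : F, (g : Matrix (Fin n) (Fin n) F) = c • (1 : Matrix (Fin n) (Fin n) F) := by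
  obtain ⟨g0, hg0⟩ := exists_conj_signs hi
  let H1 : Subgroup (GL (Fin n) F) := H.map (MulAut.conj g0).toMonoidHom
  have hmem : ∀ g ∈ H, g0 * g * g0⁻¹ ∈ H1 := fun g hg => ⟨g, hg, by simp⟩
  let eqv : H ≃* H1 := H.equivMapOfInjective _ (MulAut.conj g0).injective
  have hcard : Nat.card H1 = Nat.card H := (Nat.card_congr eqv.toEquiv).symm
  have hsolv1 : Group.IsSolvable H1 := by
    haveI := hsolv
    exact Group.isSolvable_of_surjective (f := eqv.toMonoidHom) eqv.surjective
  have hE : HasDiag H1 := by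
    intro i
    refine ⟨diagSignHom n F (fun k => if k = i then -1 else 1), ?_, ?_⟩
    · have := hmem _ (hg0 (fun k => if k = i then -1 else 1))
      simpa [mul_assoc] using this
    · change Matrix.diagonal _ = _
      congr 1
      ext k
      by_cases hk : k = i <;> simp [hk]
  obtain ⟨x, y, z, hx, hy, hz, hm⟩ := core_of_diag (H := H1) h2 (by rwa [hcard]) (by rwa [hcard])
    hsolv1 hE hn hF
  have lift : ∀ x : Matrix (Fin n) (Fin n) F, x.det = 1 →
      ∃ X : GL (Fin n) F, (X : Matrix (Fin n) (Fin n) F) = x := fun x hx =>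
    ⟨Matrix.GeneralLinearGroup.mkOfDetNeZero x (by rw [hx]; exact one_ne_zero), rfl⟩
  obtain ⟨X, rfl⟩ := lift x hx
  obtain ⟨Y, rfl⟩ := lift y hy
  obtain ⟨Z, rfl⟩ := lift z hz
  have hdet : ∀ X : GL (Fin n) F, (X : Matrix (Fin n) (Fin n) F).det = 1 →
      ((g0⁻¹ * X * g0 : GL (Fin n) F) : Matrix (Fin n) (Fin n) F).det = 1 := by
    intro X hX
    have h1 : ((g0⁻¹ : GL (Fin n) F) : Matrix (Fin n) (Fin n) F) *
        (g0 : Matrix (Fin n) (Fin n) F) = 1 := g0.inv_mul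
    have := congrArg Matrix.det h1
    rw [Matrix.det_mul, Matrix.det_one] at this
    rw [Units.val_mul, Units.val_mul, Matrix.det_mul, Matrix.det_mul, hX, mul_one, this]
  have htr : ∀ X g : GL (Fin n) F,
      (X : Matrix (Fin n) (Fin n) F) * ((g0 * g * g0⁻¹ : GL (Fin n) F) : Matrix (Fin n) (Fin n) F) =
      ((g0 * ((g0⁻¹ * X * g0) * g * (g0⁻¹ * X * g0)⁻¹) * g0⁻¹ : GL (Fin n) F) :
        Matrix (Fin n) (Fin n) F) * X := by
    intro X g
    rw [← Units.val_mul, ← Units.val_mul]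
    congr 1
    group
  refine ⟨g0⁻¹ * X * g0, g0⁻¹ * Y * g0, g0⁻¹ * Z * g0, hdet X hx, hdet Y hy, hdet Z hz, ?_⟩
  intro g hg h1 h2 h3
  obtain ⟨c, hc⟩ := hm _ (hmem g hg) _ (hmem _ h1) _ (hmem _ h2) _ (hmem _ h3)
    (htr X g) (htr Y g) (htr Z g)
  refine ⟨c, ?_⟩
  have : g = g0⁻¹ * (g0 * g * g0⁻¹) * g0 := by group
  rw [this, Units.val_mul, Units.val_mul, hc]
  simp only [mul_smul_comm, mul_one, smul_mul_assoc]
  rw [← Units.val_mul]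
  simp

end Final


theorem stmt5 (p f q n : ℕ) (hp : p.Prime) (hf : 1 ≤ f) (hq : q = p ^ f)
    (F : Type) [Field F] [Fintype F] (hcard : Fintype.card F = q)
    (hn : 2 ≤ n) (hnonsolv : ¬ IsSolvable (GL (Fin n) F))
    (π : Set ℕ) (hπ : ∀ r ∈ π, r.Prime) (h2pi : 2 ∈ π) (h3pi : 3 ∉ π) (hppi : p ∉ π)
    (H : Subgroup (GL (Fin n) F)) (hH : IsHallSubgroup π H)
    (hsolv : IsSolvable ↥H)
    :
    ∃ x y z : GL (Fin n) F,
      x ∈ (H : Set (GL (Fin n) F)) * (SLsub n F : Set (GL (Fin n) F)) ∧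
      y ∈ (H : Set (GL (Fin n) F)) * (SLsub n F : Set (GL (Fin n) F)) ∧
      z ∈ (H : Set (GL (Fin n) F)) * (SLsub n F : Set (GL (Fin n) F)) ∧
    ∀ g ∈ H ⊓ conjBy H x ⊓ conjBy H y ⊓ conjBy H z,
      ∃ c : F, (g : Matrix (Fin n) (Fin n) F) = c • (1 : Matrix (Fin n) (Fin n) F) := by
  have hsolv' : Group.IsSolvable ↥H := hsolv
  have hc : Fintype.card F = p ^ f := hcard.trans hq
  haveI : Fact p.Prime := ⟨hp⟩
  haveI : CharP F p := charP_of_card_eq_prime_pow (f := f) (by rw [← hc])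
  have hp2 : p ≠ 2 := fun h => hppi (h ▸ h2pi)
  have h2 : (2 : F) ≠ 0 := by
    intro h
    have h' : ((2 : ℕ) : F) = 0 := by exact_mod_cast h
    rw [CharP.cast_eq_zero_iff F p] at h'
    exact hp2 ((Nat.prime_dvd_prime_iff_eq hp Nat.prime_two).1 h')
  have hpH : (Nat.card H : F) ≠ 0 := by
    intro h
    rw [CharP.cast_eq_zero_iff F p] at h
    exact hppi (hH.1 p hp h)
  have h3 : ¬ 3 ∣ Nat.card H := fun h => h3pi (hH.1 3 Nat.prime_three h)
  have hF : n = 2 → 3 < Fintype.card F := by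
    intro h
    subst h
    have h3' : Fintype.card F ≠ 3 := fun h => hnonsolv (gl2_solvable h)
    have hge : p ≤ Fintype.card F := by
      rw [hc]; exact Nat.le_self_pow (by omega) p
    have := hp.two_le
    omega
  obtain ⟨x, y, z, hx, hy, hz, hm⟩ := final_core h2 hpH h3 hsolv' (hH.2 2 h2pi) hn hF
  refine ⟨x, y, z, ⟨1, H.one_mem, x, hx, one_mul x⟩, ⟨1, H.one_mem, y, hy, one_mul y⟩,
    ⟨1, H.one_mem, z, hz, one_mul z⟩, ?_⟩
  have hconj : ∀ x g : GL (Fin n) F, g ∈ conjBy H x → x * g * x⁻¹ ∈ H := by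
    rintro x g ⟨k, hk, rfl⟩
    simpa [mul_assoc] using hk
  rintro g ⟨⟨⟨hg, h1⟩, h2⟩, h3⟩
  exact hm g hg (hconj x g h1) (hconj y g h2) (hconj z g h3)
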